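/- arXiv:2006.10624 — 3 statements merged into one kernel-verified Lean document; each statement's English description precedes it below -/
import Mathlib

section
/- Let V, π, κ, θ be as in the kernel setting with detailed balance, and let G: V×V×ℝ×ℝ → ℝ be jointly measurable, continuous in (u,v), with |G(x,y,u,v)| ≤ M(1+|u|+|v|), skew-symmetric (G(x,y,u,v) = −G(y,x,v,u)), and ℓ-dissipative (u ≤ u' implies G(x,y,u',v) − G(x,y,u,v) ≤ ℓ(u'−u), for some ℓ ≥ 0). If u and v are two pointwise solutions of the Cauchy problem u̇ = 𝐆[u] on [0,∞), then for every t ≥ 0: ∫_V |u_t − v_t| dπ ≤ e^{2‖κ_V‖_∞ ℓ t} ∫_V |u₀ − v₀| dπ. -/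
open MeasureTheory ProbabilityTheory Filter
open scoped ENNReal

/-- A pointwise solution of the Cauchy problem `u̇ = 𝐆[u]` on `[0,∞)`:
`u` is jointly measurable, `u_t` is `π`-integrable for every `t ≥ 0`, the time
derivative `𝐆[u_t](x) = ∫ G(x,y,u_t(x),u_t(y)) κ(x,dy)` is integrable on
`(0,T] × V` for every `T > 0`, and for `π`-a.e. `x` the map `t ↦ u_t(x)` is
locally absolutely continuous with `(d/dt)u_t(x) = 𝐆[u_t](x)` a.e., expressed
in the equivalent integral form. -/
def IsPointwiseSolution {V : Type*} [MeasurableSpace V] (π : Measure V)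
    (κ : Kernel V V) (G : V → V → ℝ → ℝ → ℝ) (u : ℝ → V → ℝ) : Prop :=
  Measurable (fun p : ℝ × V => u p.1 p.2) ∧
  (∀ t : ℝ, 0 ≤ t → Integrable (u t) π) ∧
  (∀ T : ℝ, 0 < T →
    ∫⁻ t in Set.Ioc (0:ℝ) T,
      ∫⁻ x, ENNReal.ofReal |∫ y, G x y (u t x) (u t y) ∂(κ x)| ∂π < ⊤) ∧
  (∀ᵐ x ∂π, ∀ t : ℝ, 0 ≤ t →
    u t x = u 0 x + ∫ s in Set.Ioc (0:ℝ) t, ∫ y, G x y (u s x) (u s y) ∂(κ x))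

/-!
The weak `L¹`-contraction argument: along two solutions,
`d/dt ∫ |u - v| dπ = ∫ sign (u - v) (𝐆[u] - 𝐆[v]) dπ`. By detailed balance and the skew-symmetry of
`G`, the right-hand side is half the integral over `π ⊗ₘ κ` of
`(sign (u - v)(x) - sign (u - v)(y)) * (G(x, y, u(x), u(y)) - G(x, y, v(x), v(y)))`.
The sign difference is nonzero only if `u - v` changes sign weakly between `x` and `y`, and then
dissipativity in the first state variable and, through skew-symmetry, in the second one bounds this
product by `2 ℓ (|u - v|(x) + |u - v|(y))`. Gronwall's inequality concludes.
-/

open Set Function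
open scoped NNReal Topology

section RealAnalysis

lemma measurable_coe_sign : Measurable fun r : ℝ ↦ (SignType.sign r : ℝ) := by
  rw [← funext deriv_abs]
  exact measurable_deriv _

lemma abs_coe_sign_le_one (r : ℝ) : |(SignType.sign r : ℝ)| ≤ 1 := by
  cases SignType.sign r <;> simp

lemma nonpos_and_nonneg_of_coe_sign_lt {r t : ℝ}
    (h : (SignType.sign r : ℝ) < SignType.sign t) : r ≤ 0 ∧ 0 ≤ t := by
  constructor
  · by_contra! hr
    rw [sign_pos hr, SignType.coe_one] at h
    linarith [(abs_le.1 (abs_coe_sign_le_one t)).2]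
  · by_contra! ht
    rw [sign_neg ht, SignType.coe_neg_one] at h
    linarith [(abs_le.1 (abs_coe_sign_le_one r)).1]

lemma integrable_sign_mul {α : Type*} [MeasurableSpace α] {μ : Measure α} {φ f : α → ℝ}
    (hφ : AEMeasurable φ μ) (hf : Integrable f μ) :
    Integrable (fun x ↦ SignType.sign (φ x) * f x) μ :=
  hf.bdd_mul (measurable_coe_sign.comp_aemeasurable hφ).aestronglyMeasurable
    (Eventually.of_forall fun x ↦ abs_coe_sign_le_one (φ x))

lemma deriv_abs_comp {W : ℝ → ℝ} {W' x : ℝ} (hW : HasDerivAt W W' x) :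
    deriv (fun t ↦ |W t|) x = SignType.sign (W x) * W' := by
  rcases eq_or_ne (W x) 0 with hx | hx
  · have hmin : IsLocalMin (fun t ↦ |W t|) x := Eventually.of_forall fun t ↦ by simp [hx]
    simp [hmin.deriv_eq_zero, hx]
  · exact ((hasDerivAt_abs hx).comp x hW).deriv

lemma absolutelyContinuousOnInterval_abs {W : ℝ → ℝ} {a b : ℝ}
    (hW : AbsolutelyContinuousOnInterval W a b) :
    AbsolutelyContinuousOnInterval (fun t ↦ |W t|) a b :=
  squeeze_zero (fun _ ↦ Finset.sum_nonneg fun _ _ ↦ dist_nonneg)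
    (fun _ ↦ Finset.sum_le_sum fun _ _ ↦ abs_abs_sub_abs_le _ _) hW

lemma abs_eq_add_integral_sign_mul {w g : ℝ → ℝ} {a b : ℝ}
    (hg : IntervalIntegrable g volume a b)
    (hw : ∀ t ∈ uIcc a b, w t = w a + ∫ s in a..t, g s) :
    |w b| = |w a| + ∫ s in a..b, SignType.sign (w s) * g s := by
  set W : ℝ → ℝ := fun t ↦ w a + ∫ s in a..t, g s
  have hW : AbsolutelyContinuousOnInterval (fun t ↦ |W t|) a b := by
    refine absolutelyContinuousOnInterval_abs ?_
    have hprim := hg.absolutelyContinuousOnInterval_intervalIntegral (c := a) left_mem_uIcc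
    simpa [AbsolutelyContinuousOnInterval, W] using hprim
  have hderiv : ∫ s in a..b, deriv (fun t ↦ |W t|) s = ∫ s in a..b, SignType.sign (w s) * g s := by
    refine intervalIntegral.integral_congr_ae ?_
    filter_upwards [hg.ae_hasDerivAt_integral] with s hs hmem
    have hmem' := uIoc_subset_uIcc hmem
    rw [deriv_abs_comp ((hs hmem' a left_mem_uIcc).const_add (w a)), hw s hmem']
  rw [← hderiv, hW.integral_deriv_eq_sub, hw b right_mem_uIcc, hw a left_mem_uIcc]
  simp [W]

lemma le_mul_exp_of_le_add_mul_integral {f : ℝ → ℝ} {a b c δ : ℝ} (hc : 0 ≤ c)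
    (hf : ContinuousOn f (Icc a b))
    (hle : ∀ t ∈ Icc a b, f t ≤ δ + c * ∫ s in a..t, f s) :
    ∀ t ∈ Icc a b, f t ≤ δ * Real.exp (c * (t - a)) := by
  intro t ht
  have hint : ∀ r ∈ Icc a b, IntervalIntegrable f volume a r := fun r hr ↦
    (hf.mono (by rw [uIcc_of_le hr.1]; exact Icc_subset_Icc_right hr.2)).intervalIntegrable
  have hcont : ContinuousOn (fun r ↦ δ + c * ∫ s in a..r, f s) (Icc a b) := by
    have hprim := intervalIntegral.continuousOn_primitive_interval'
      (hint b ⟨ht.1.trans ht.2, le_rfl⟩) left_mem_uIcc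
    rw [uIcc_of_le (ht.1.trans ht.2)] at hprim
    fun_prop
  have hderiv : ∀ r ∈ Ico a b,
      HasDerivWithinAt (fun r ↦ δ + c * ∫ s in a..r, f s) (c * f r) (Ici r) r := by
    intro r hr
    have hnhds : Icc a b ∈ 𝓝[>] r := Icc_mem_nhdsGT_of_mem hr
    refine ((intervalIntegral.integral_hasDerivWithinAt_right (hint r (Ico_subset_Icc_self hr))
      ?_ ?_).const_mul c).const_add δ
    · exact ⟨Icc a b, hnhds, hf.aestronglyMeasurable measurableSet_Icc⟩
    · exact (hf r (Ico_subset_Icc_self hr)).mono_of_mem_nhdsWithin hnhds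
  refine (hle t ht).trans ?_
  rw [← gronwallBound_ε0]
  refine le_gronwallBound_of_liminf_deriv_right_le hcont
    (fun r hr ρ hρ ↦ (hderiv r hr).liminf_right_slope_le hρ) (by simp) (fun r hr ↦ ?_) t ht
  rw [add_zero]
  exact mul_le_mul_of_nonneg_left (hle r (Ico_subset_Icc_self hr)) hc

end RealAnalysis

section ParametricPrimitive

variable {V : Type*} [MeasurableSpace V] {π : Measure V} [SFinite π] {a b : ℝ} {w g : ℝ → V → ℝ}

lemma continuousOn_integral_abs_of_primitive
    (hw : ∀ t ∈ Icc a b, AEStronglyMeasurable (w t) π) (hwa : Integrable (w a) π)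
    (hg : Integrable (uncurry g) ((volume.restrict (Ioc a b)).prod π))
    (hwg : ∀ᵐ x ∂π, ∀ t ∈ Icc a b, w t x = w a x + ∫ s in a..t, g s x) :
    ContinuousOn (fun t ↦ ∫ x, |w t x| ∂π) (Icc a b) := by
  refine continuousOn_of_dominated
    (bound := fun x ↦ |w a x| + ∫ s in Ioc a b, |g s x|) ?_ ?_ ?_ ?_
  · exact fun t ht ↦ (hw t ht).norm
  · intro t ht
    filter_upwards [hwg, hg.prod_left_ae] with x hx hgx
    calc ‖|w t x|‖ = |w a x + ∫ s in Ioc a t, g s x| := by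
          rw [Real.norm_eq_abs, abs_abs, hx t ht, intervalIntegral.integral_of_le ht.1]
      _ ≤ |w a x| + |∫ s in Ioc a t, g s x| := abs_add_le _ _
      _ ≤ |w a x| + ∫ s in Ioc a t, |g s x| := by gcongr; exact abs_integral_le_integral_abs
      _ ≤ |w a x| + ∫ s in Ioc a b, |g s x| := add_le_add le_rfl <|
          setIntegral_mono_set hgx.abs (Eventually.of_forall fun _ ↦ abs_nonneg _)
            (Ioc_subset_Ioc_right ht.2).eventuallyLE
  · exact hwa.abs.add hg.abs.integral_prod_right
  · filter_upwards [hwg, hg.prod_left_ae] with x hx hgx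
    have hprim : ContinuousOn (fun t ↦ ∫ s in Ioc a t, g s x) (Icc a b) :=
      intervalIntegral.continuousOn_primitive
        ((integrableOn_Icc_iff_integrableOn_Ioc (by simp)).2 hgx)
    refine ((continuousOn_const (c := w a x)).add hprim).abs.congr fun t ht ↦ ?_
    simp only [hx t ht, intervalIntegral.integral_of_le ht.1, Pi.add_apply]

lemma integral_abs_eq_add_integral_integral_sign_mul (hab : a ≤ b)
    (hw : Measurable (uncurry w)) (hwa : Integrable (w a) π)
    (hg : Integrable (uncurry g) ((volume.restrict (Ioc a b)).prod π))
    (hwg : ∀ᵐ x ∂π, ∀ t ∈ Icc a b, w t x = w a x + ∫ s in a..t, g s x) :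
    ∫ x, |w b x| ∂π
      = ∫ x, |w a x| ∂π + ∫ s in a..b, ∫ x, SignType.sign (w s x) * g s x ∂π := by
  have hsign := integrable_sign_mul hw.aemeasurable hg
  calc ∫ x, |w b x| ∂π
      = ∫ x, (|w a x| + ∫ s in Ioc a b, SignType.sign (w s x) * g s x) ∂π := by
        refine integral_congr_ae ?_
        filter_upwards [hwg, hg.prod_left_ae] with x hx hgx
        rw [← intervalIntegral.integral_of_le hab]
        refine abs_eq_add_integral_sign_mul (w := (w · x))
          ((intervalIntegrable_iff_integrableOn_Ioc_of_le hab).2 hgx) ?_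
        rwa [uIcc_of_le hab]
    _ = ∫ x, |w a x| ∂π + ∫ x, (∫ s in Ioc a b, SignType.sign (w s x) * g s x) ∂π :=
        integral_add hwa.abs hsign.integral_prod_right
    _ = ∫ x, |w a x| ∂π + ∫ s in a..b, ∫ x, SignType.sign (w s x) * g s x ∂π := by
        rw [intervalIntegral.integral_of_le hab, ← integral_integral_swap hsign]

lemma integral_abs_le_mul_exp_of_integral_sign_mul_le {c : ℝ} (hc : 0 ≤ c) (hab : a ≤ b)
    (hw : Measurable (uncurry w)) (hwa : Integrable (w a) π)
    (hg : Integrable (uncurry g) ((volume.restrict (Ioc a b)).prod π))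
    (hwg : ∀ᵐ x ∂π, ∀ t ∈ Icc a b, w t x = w a x + ∫ s in a..t, g s x)
    (hdiss : ∀ s ∈ Ioc a b,
      ∫ x, SignType.sign (w s x) * g s x ∂π ≤ c * ∫ x, |w s x| ∂π) :
    ∫ x, |w b x| ∂π ≤ (∫ x, |w a x| ∂π) * Real.exp (c * (b - a)) := by
  have hwt : ∀ t, Measurable (w t) := fun t ↦ hw.comp measurable_prodMk_left
  have hcont : ContinuousOn (fun t ↦ ∫ x, |w t x| ∂π) (Icc a b) :=
    continuousOn_integral_abs_of_primitive (fun t _ ↦ (hwt t).aestronglyMeasurable) hwa hg hwg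
  refine le_mul_exp_of_le_add_mul_integral hc hcont (fun t ht ↦ ?_) b (right_mem_Icc.2 hab)
  have hsub : Ioc a t ⊆ Ioc a b := Ioc_subset_Ioc_right ht.2
  have hgt : Integrable (uncurry g) ((volume.restrict (Ioc a t)).prod π) :=
    hg.mono_measure (Measure.prod_mono (Measure.restrict_mono_set _ hsub) le_rfl)
  have hwgt : ∀ᵐ x ∂π, ∀ r ∈ Icc a t, w r x = w a x + ∫ s in a..r, g s x := by
    filter_upwards [hwg] with x hx r hr using hx r (Icc_subset_Icc_right ht.2 hr)
  rw [integral_abs_eq_add_integral_integral_sign_mul ht.1 hw hwa hgt hwgt,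
    ← intervalIntegral.integral_const_mul, intervalIntegral.integral_of_le ht.1,
    intervalIntegral.integral_of_le ht.1]
  refine add_le_add le_rfl <| setIntegral_mono_on
    (integrable_sign_mul hw.aemeasurable hgt).integral_prod_left ?_ measurableSet_Ioc
    fun s hs ↦ hdiss s (hsub hs)
  exact (hcont.integrableOn_Icc.mono_set (hsub.trans Ioc_subset_Icc_self)).const_mul c

end ParametricPrimitive

section CompProd

variable {α β : Type*} [MeasurableSpace α] [MeasurableSpace β] {μ : Measure α} [SFinite μ]
  {κ : Kernel α β} [IsSFiniteKernel κ]

lemma fst_compProd_le_smul {c : ℝ≥0∞} (hκ : ∀ x, κ x univ ≤ c) : (μ ⊗ₘ κ).fst ≤ c • μ := by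
  refine Measure.le_iff.2 fun s hs ↦ ?_
  calc (μ ⊗ₘ κ).fst s = ∫⁻ x in s, κ x univ ∂μ := by
        rw [Measure.fst_apply hs, ← prod_univ, Measure.compProd_apply_prod hs .univ]
    _ ≤ ∫⁻ _ in s, c ∂μ := lintegral_mono hκ
    _ = (c • μ) s := by simp

variable {K : ℝ≥0} {f : α → ℝ}

lemma integrable_comp_fst_compProd (hκ : ∀ x, κ x univ ≤ K) (hf : Integrable f μ) :
    Integrable (fun p : α × β ↦ f p.1) (μ ⊗ₘ κ) :=
  ((hf.smul_measure ENNReal.coe_ne_top).mono_measure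
    (fst_compProd_le_smul hκ)).comp_measurable measurable_fst

lemma integral_comp_fst_compProd_le (hκ : ∀ x, κ x univ ≤ K) (hf : Integrable f μ)
    (hf0 : 0 ≤ f) : ∫ p, f p.1 ∂(μ ⊗ₘ κ) ≤ K * ∫ x, f x ∂μ := by
  have hfK : Integrable f ((K : ℝ≥0∞) • μ) := hf.smul_measure ENNReal.coe_ne_top
  have hle := fst_compProd_le_smul (μ := μ) hκ
  calc ∫ p, f p.1 ∂(μ ⊗ₘ κ) = ∫ x, f x ∂(μ ⊗ₘ κ).fst :=
        (integral_map measurable_fst.aemeasurable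
          (hfK.mono_measure hle).aestronglyMeasurable).symm
    _ ≤ ∫ x, f x ∂((K : ℝ≥0∞) • μ) :=
        integral_mono_measure hle (Eventually.of_forall hf0) hfK
    _ = K * ∫ x, f x ∂μ := by simp [NNReal.smul_def]

end CompProd

section SwapInvariant

variable {V : Type*} [MeasurableSpace V] {θ : Measure (V × V)}

lemma integral_comp_swap (hθ : θ.map Prod.swap = θ) (f : V × V → ℝ) :
    ∫ p, f p.swap ∂θ = ∫ p, f p ∂θ :=
  MeasurePreserving.integral_comp ⟨measurable_swap, hθ⟩
    MeasurableEquiv.prodComm.measurableEmbedding f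

lemma integrable_comp_swap (hθ : θ.map Prod.swap = θ) {f : V × V → ℝ} (hf : Integrable f θ) :
    Integrable (fun p ↦ f p.swap) θ :=
  MeasurePreserving.integrable_comp_of_integrable ⟨measurable_swap, hθ⟩ hf

lemma two_mul_integral_fst_mul_eq_integral_sub_mul (hθ : θ.map Prod.swap = θ)
    {s : V → ℝ} {D : V × V → ℝ} (hD : ∀ p, D p.swap = -D p)
    (hsD : Integrable (fun p ↦ s p.1 * D p) θ) :
    2 * ∫ p, s p.1 * D p ∂θ = ∫ p, (s p.1 - s p.2) * D p ∂θ := by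
  have hsplit : ∀ p : V × V, (s p.1 - s p.2) * D p = s p.1 * D p + s p.swap.1 * D p.swap :=
    fun p ↦ by rw [hD, Prod.fst_swap]; ring
  simp only [hsplit]
  rw [integral_add hsD (integrable_comp_swap hθ hsD),
    integral_comp_swap hθ fun p ↦ s p.1 * D p, two_mul]

end SwapInvariant

section Field

variable {V : Type*} {G : V → V → ℝ → ℝ → ℝ} {ℓ : ℝ}

/-- The flux `G(x, y, a(x), a(y))` of the state `a` through the edge `(x, y)`. -/
def edgeFlux (G : V → V → ℝ → ℝ → ℝ) (a : V → ℝ) (p : V × V) : ℝ :=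
  G p.1 p.2 (a p.1) (a p.2)

/-- The right-hand side `𝐆[a](x) = ∫ G(x, y, a(x), a(y)) κ(x, dy)` of the evolution equation. -/
noncomputable def nonlocalField [MeasurableSpace V] (κ : Kernel V V) (G : V → V → ℝ → ℝ → ℝ)
    (a : V → ℝ) (x : V) : ℝ :=
  ∫ y, edgeFlux G a (x, y) ∂κ x

lemma edgeFlux_swap (hGskew : ∀ (x y : V) (a b : ℝ), G x y a b = -G y x b a)
    (a : V → ℝ) (p : V × V) : edgeFlux G a p.swap = -edgeFlux G a p :=
  hGskew _ _ _ _

lemma sub_le_mul_abs_add_abs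
    (hGskew : ∀ (x y : V) (a b : ℝ), G x y a b = -G y x b a)
    (hGdiss : ∀ (x y : V) (a a' b : ℝ), a ≤ a' → G x y a' b - G x y a b ≤ ℓ * (a' - a))
    (x y : V) {a a' b b' : ℝ} (ha : a' ≤ a) (hb : b ≤ b') :
    G x y a b - G x y a' b' ≤ ℓ * (|a - a'| + |b - b'|) := by
  have hfst : G x y a b - G x y a' b ≤ ℓ * (a - a') := hGdiss x y a' a b ha
  have hsnd : G x y a' b - G x y a' b' ≤ ℓ * (b' - b) := by
    have := hGdiss y x b b' a' hb
    rw [hGskew y x b', hGskew y x b] at this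
    linarith
  rw [abs_of_nonneg (sub_nonneg.2 ha), abs_of_nonpos (sub_nonpos.2 hb)]
  linarith

lemma sign_sub_sign_mul_sub_le
    (hGskew : ∀ (x y : V) (a b : ℝ), G x y a b = -G y x b a) (hℓ : 0 ≤ ℓ)
    (hGdiss : ∀ (x y : V) (a a' b : ℝ), a ≤ a' → G x y a' b - G x y a b ≤ ℓ * (a' - a))
    (x y : V) (a a' b b' : ℝ) :
    ((SignType.sign (a - a') : ℝ) - SignType.sign (b - b')) * (G x y a b - G x y a' b')
      ≤ 2 * ℓ * (|a - a'| + |b - b'|) := by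
  set R : ℝ := ℓ * (|a - a'| + |b - b'|) with hR_def
  have hR : 0 ≤ R := by positivity
  have hmul_le : ∀ {d D : ℝ}, 0 ≤ d → d ≤ 2 → D ≤ R → d * D ≤ 2 * R := fun hd0 hd hD ↦
    (mul_le_mul_of_nonneg_left hD hd0).trans (mul_le_mul_of_nonneg_right hd hR)
  obtain ⟨hsa, hsa'⟩ := abs_le.1 (abs_coe_sign_le_one (a - a'))
  obtain ⟨hsb, hsb'⟩ := abs_le.1 (abs_coe_sign_le_one (b - b'))
  rw [mul_assoc, ← hR_def]
  rcases lt_trichotomy (SignType.sign (a - a') : ℝ) (SignType.sign (b - b')) with hlt | heq | hgt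
  · obtain ⟨ha, hb⟩ := nonpos_and_nonneg_of_coe_sign_lt hlt
    have hG := sub_le_mul_abs_add_abs hGskew hGdiss x y (sub_nonpos.1 ha) (sub_nonneg.1 hb)
    rw [abs_sub_comm a', abs_sub_comm b'] at hG
    rw [← neg_mul_neg, neg_sub, neg_sub]
    exact hmul_le (by linarith) (by linarith) hG
  · rw [heq, sub_self, zero_mul]
    positivity
  · obtain ⟨hb, ha⟩ := nonpos_and_nonneg_of_coe_sign_lt hgt
    have hG := sub_le_mul_abs_add_abs hGskew hGdiss x y (sub_nonneg.1 ha) (sub_nonpos.1 hb)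
    exact hmul_le (by linarith) (by linarith) hG

end Field

section Dissipation

variable {V : Type*} [MeasurableSpace V] {π : Measure V} [SFinite π] {κ : Kernel V V}
  [IsSFiniteKernel κ] {K : ℝ≥0} {G : V → V → ℝ → ℝ → ℝ} {a b : V → ℝ}

lemma measurable_uncurry_nonlocalField
    (hGmeas : Measurable fun p : (V × V) × ℝ × ℝ ↦ G p.1.1 p.1.2 p.2.1 p.2.2)
    {u : ℝ → V → ℝ} (hu : Measurable (uncurry u)) :
    Measurable (uncurry fun t x ↦ nonlocalField κ G (u t) x) := by
  have hsrc : Measurable fun q : (ℝ × V) × V ↦ u q.1.1 q.1.2 := hu.comp measurable_fst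
  have htgt : Measurable fun q : (ℝ × V) × V ↦ u q.1.1 q.2 :=
    hu.comp (measurable_fst.fst.prodMk measurable_snd)
  have hflux : Measurable fun q : (ℝ × V) × V ↦ edgeFlux G (u q.1.1) (q.1.2, q.2) :=
    hGmeas.comp ((measurable_fst.snd.prodMk measurable_snd).prodMk (hsrc.prodMk htgt))
  exact (hflux.stronglyMeasurable.integral_kernel_prod_right'
    (κ := κ.comap (Prod.snd : ℝ × V → V) measurable_snd)).measurable

lemma integral_mul_nonlocalField_sub {s : V → ℝ} (hGa : Integrable (edgeFlux G a) (π ⊗ₘ κ))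
    (hGb : Integrable (edgeFlux G b) (π ⊗ₘ κ))
    (hs : Integrable (fun p ↦ s p.1 * (edgeFlux G a p - edgeFlux G b p)) (π ⊗ₘ κ)) :
    ∫ x, s x * (nonlocalField κ G a x - nonlocalField κ G b x) ∂π
      = ∫ p, s p.1 * (edgeFlux G a p - edgeFlux G b p) ∂(π ⊗ₘ κ) := by
  rw [Measure.integral_compProd hs]
  refine integral_congr_ae ?_
  filter_upwards [((Measure.integrable_compProd_iff hGa.aestronglyMeasurable).1 hGa).1,
    ((Measure.integrable_compProd_iff hGb.aestronglyMeasurable).1 hGb).1] with x hax hbx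
  rw [integral_const_mul, integral_sub hax hbx]
  rfl

lemma integrable_edgeFlux_of_linear_growth [IsFiniteMeasure (π ⊗ₘ κ)] {M : ℝ}
    (hK : ∀ x, κ x univ ≤ K) (hdb : (π ⊗ₘ κ).map Prod.swap = π ⊗ₘ κ)
    (hGmeas : Measurable fun p : (V × V) × ℝ × ℝ ↦ G p.1.1 p.1.2 p.2.1 p.2.2)
    (hGbound : ∀ (x y : V) (a b : ℝ), |G x y a b| ≤ M * (1 + |a| + |b|))
    (ha : Integrable a π) :
    Integrable (edgeFlux G a) (π ⊗ₘ κ) := by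
  have hfst : Integrable (fun p : V × V ↦ a p.1) (π ⊗ₘ κ) := integrable_comp_fst_compProd hK ha
  have hsnd : Integrable (fun p : V × V ↦ a p.2) (π ⊗ₘ κ) := integrable_comp_swap hdb hfst
  have hmeas : AEMeasurable (edgeFlux G a) (π ⊗ₘ κ) :=
    hGmeas.comp_aemeasurable (aemeasurable_id.prodMk (hfst.aemeasurable.prodMk hsnd.aemeasurable))
  exact ((((integrable_const 1).add hfst.abs).add hsnd.abs).const_mul M).mono'
    hmeas.aestronglyMeasurable (Eventually.of_forall fun _ ↦ hGbound _ _ _ _)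

lemma integral_sign_mul_edgeFlux_sub_le {θ : Measure (V × V)} (hθ : θ.map Prod.swap = θ)
    (hGskew : ∀ (x y : V) (a b : ℝ), G x y a b = -G y x b a) {ℓ : ℝ} (hℓ : 0 ≤ ℓ)
    (hGdiss : ∀ (x y : V) (a a' b : ℝ), a ≤ a' → G x y a' b - G x y a b ≤ ℓ * (a' - a))
    (hab : Integrable (fun p : V × V ↦ a p.1 - b p.1) θ)
    (hGa : Integrable (edgeFlux G a) θ) (hGb : Integrable (edgeFlux G b) θ) :
    ∫ p, SignType.sign (a p.1 - b p.1) * (edgeFlux G a p - edgeFlux G b p) ∂θ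
      ≤ 2 * ℓ * ∫ p, |a p.1 - b p.1| ∂θ := by
  set s : V → ℝ := fun x ↦ SignType.sign (a x - b x)
  set D : V × V → ℝ := fun p ↦ edgeFlux G a p - edgeFlux G b p
  have hab' : Integrable (fun p : V × V ↦ a p.2 - b p.2) θ := integrable_comp_swap hθ hab
  have hD : Integrable D θ := hGa.sub hGb
  have hDswap : ∀ p, D p.swap = -D p := fun p ↦ by
    simp only [D, edgeFlux_swap hGskew, neg_sub_neg, neg_sub]
  have hs₁ : Integrable (fun p ↦ s p.1 * D p) θ := integrable_sign_mul hab.aemeasurable hD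
  have hs₂ : Integrable (fun p ↦ s p.2 * D p) θ := integrable_sign_mul hab'.aemeasurable hD
  have htwo : 2 * ∫ p, s p.1 * D p ∂θ ≤ 2 * (2 * ℓ * ∫ p, |a p.1 - b p.1| ∂θ) := by
    calc 2 * ∫ p, s p.1 * D p ∂θ = ∫ p, (s p.1 - s p.2) * D p ∂θ :=
          two_mul_integral_fst_mul_eq_integral_sub_mul hθ hDswap hs₁
      _ ≤ ∫ p, 2 * ℓ * (|a p.1 - b p.1| + |a p.2 - b p.2|) ∂θ := by
          refine integral_mono ?_ ((hab.abs.add hab'.abs).const_mul _) fun p ↦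
            sign_sub_sign_mul_sub_le hGskew hℓ hGdiss p.1 p.2 _ _ _ _
          simp only [sub_mul]
          exact hs₁.sub hs₂
      _ = 2 * (2 * ℓ * ∫ p, |a p.1 - b p.1| ∂θ) := by
          have hswap : ∫ p, |a p.2 - b p.2| ∂θ = ∫ p, |a p.1 - b p.1| ∂θ :=
            integral_comp_swap hθ fun p ↦ |a p.1 - b p.1|
          rw [integral_const_mul, integral_add hab.abs hab'.abs, hswap]
          ring
  linarith

lemma integral_sign_mul_nonlocalField_sub_le (hK : ∀ x, κ x univ ≤ K)
    (hdb : (π ⊗ₘ κ).map Prod.swap = π ⊗ₘ κ)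
    (hGskew : ∀ (x y : V) (a b : ℝ), G x y a b = -G y x b a) {ℓ : ℝ} (hℓ : 0 ≤ ℓ)
    (hGdiss : ∀ (x y : V) (a a' b : ℝ), a ≤ a' → G x y a' b - G x y a b ≤ ℓ * (a' - a))
    (ha : Integrable a π) (hb : Integrable b π)
    (hGa : Integrable (edgeFlux G a) (π ⊗ₘ κ)) (hGb : Integrable (edgeFlux G b) (π ⊗ₘ κ)) :
    ∫ x, SignType.sign (a x - b x) * (nonlocalField κ G a x - nonlocalField κ G b x) ∂π
      ≤ 2 * K * ℓ * ∫ x, |a x - b x| ∂π := by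
  have hfst : Integrable (fun p : V × V ↦ a p.1 - b p.1) (π ⊗ₘ κ) :=
    integrable_comp_fst_compProd hK (ha.sub hb)
  have hsD := integrable_sign_mul hfst.aemeasurable (hGa.sub hGb)
  calc ∫ x, SignType.sign (a x - b x) * (nonlocalField κ G a x - nonlocalField κ G b x) ∂π
      = ∫ p, SignType.sign (a p.1 - b p.1) * (edgeFlux G a p - edgeFlux G b p) ∂(π ⊗ₘ κ) :=
        integral_mul_nonlocalField_sub (s := fun x ↦ SignType.sign (a x - b x)) hGa hGb hsD
    _ ≤ 2 * ℓ * ∫ p, |a p.1 - b p.1| ∂(π ⊗ₘ κ) :=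
        integral_sign_mul_edgeFlux_sub_le hdb hGskew hℓ hGdiss hfst hGa hGb
    _ ≤ 2 * ℓ * (K * ∫ x, |a x - b x| ∂π) := by
        gcongr
        exact integral_comp_fst_compProd_le hK (ha.sub hb).abs fun _ ↦ abs_nonneg _
    _ = 2 * K * ℓ * ∫ x, |a x - b x| ∂π := by ring

end Dissipation

namespace IsPointwiseSolution

variable {V : Type*} [MeasurableSpace V] {π : Measure V} {κ : Kernel V V}
  {G : V → V → ℝ → ℝ → ℝ} {u v : ℝ → V → ℝ}

lemma measurable_uncurry (hu : IsPointwiseSolution π κ G u) : Measurable (uncurry u) := hu.1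

lemma integrable (hu : IsPointwiseSolution π κ G u) {t : ℝ} (ht : 0 ≤ t) : Integrable (u t) π :=
  hu.2.1 t ht

lemma integrable_nonlocalField [SFinite π] [IsSFiniteKernel κ]
    (hu : IsPointwiseSolution π κ G u)
    (hGmeas : Measurable fun p : (V × V) × ℝ × ℝ ↦ G p.1.1 p.1.2 p.2.1 p.2.2) (T : ℝ) :
    Integrable (uncurry fun t x ↦ nonlocalField κ G (u t) x)
      ((volume.restrict (Ioc 0 T)).prod π) := by
  have hmeas := measurable_uncurry_nonlocalField (κ := κ) hGmeas hu.measurable_uncurry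
  refine ⟨hmeas.aestronglyMeasurable, ?_⟩
  rw [HasFiniteIntegral, lintegral_prod _ hmeas.enorm.aemeasurable]
  refine lt_of_le_of_lt ?_ (hu.2.2.1 (max T 1) (by positivity))
  simp only [Real.enorm_eq_ofReal_abs]
  exact lintegral_mono_set (Ioc_subset_Ioc_right (le_max_left T 1))

lemma sub_eq_add_integral [SFinite π] [IsSFiniteKernel κ]
    (hu : IsPointwiseSolution π κ G u) (hv : IsPointwiseSolution π κ G v)
    (hGmeas : Measurable fun p : (V × V) × ℝ × ℝ ↦ G p.1.1 p.1.2 p.2.1 p.2.2) (T : ℝ) :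
    ∀ᵐ x ∂π, ∀ t ∈ Icc 0 T, u t x - v t x
      = u 0 x - v 0 x + ∫ s in 0..t, (nonlocalField κ G (u s) x - nonlocalField κ G (v s) x) := by
  filter_upwards [(hu.integrable_nonlocalField hGmeas T).prod_left_ae,
    (hv.integrable_nonlocalField hGmeas T).prod_left_ae, hu.2.2.2, hv.2.2.2]
    with x hux hvx hu_eq hv_eq t ht
  have hsub : Ioc 0 t ⊆ Ioc 0 T := Ioc_subset_Ioc_right ht.2
  have hint : ∫ s in 0..t, (nonlocalField κ G (u s) x - nonlocalField κ G (v s) x)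
      = (∫ s in Ioc 0 t, nonlocalField κ G (u s) x)
        - ∫ s in Ioc 0 t, nonlocalField κ G (v s) x := by
    rw [intervalIntegral.integral_of_le ht.1]
    exact integral_sub (IntegrableOn.mono_set hux hsub) (IntegrableOn.mono_set hvx hsub)
  rw [hint, hu_eq t ht.1, hv_eq t ht.1]
  exact add_sub_add_comm _ _ _ _

end IsPointwiseSolution

theorem L1_stability_of_solutions_general
    {V : Type*} [MeasurableSpace V]
    (π : Measure V) [SFinite π]
    (κ : Kernel V V) [IsSFiniteKernel κ]
    (K : ℝ≥0) (hK : ∀ x, κ x univ ≤ K)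
    (hdb : (π ⊗ₘ κ).map Prod.swap = π ⊗ₘ κ)
    (G : V → V → ℝ → ℝ → ℝ)
    (hGmeas : Measurable fun p : (V × V) × ℝ × ℝ ↦ G p.1.1 p.1.2 p.2.1 p.2.2)
    (hGskew : ∀ (x y : V) (a b : ℝ), G x y a b = -G y x b a)
    (ℓ : ℝ) (hℓ : 0 ≤ ℓ)
    (hGdiss : ∀ (x y : V) (a a' b : ℝ), a ≤ a' → G x y a' b - G x y a b ≤ ℓ * (a' - a))
    (u v : ℝ → V → ℝ)
    (hu : IsPointwiseSolution π κ G u) (hv : IsPointwiseSolution π κ G v)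
    (hGu : ∀ t : ℝ, 0 ≤ t → Integrable (edgeFlux G (u t)) (π ⊗ₘ κ))
    (hGv : ∀ t : ℝ, 0 ≤ t → Integrable (edgeFlux G (v t)) (π ⊗ₘ κ)) :
    ∀ t : ℝ, 0 ≤ t →
      ∫ x, |u t x - v t x| ∂π ≤ Real.exp (2 * K * ℓ * t) * ∫ x, |u 0 x - v 0 x| ∂π := by
  intro T hT
  have hdiss : ∀ s ∈ Ioc 0 T, ∫ x, SignType.sign (u s x - v s x) *
      (nonlocalField κ G (u s) x - nonlocalField κ G (v s) x) ∂π
        ≤ 2 * K * ℓ * ∫ x, |u s x - v s x| ∂π := fun s hs ↦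
    integral_sign_mul_nonlocalField_sub_le hK hdb hGskew hℓ hGdiss (hu.integrable hs.1.le)
      (hv.integrable hs.1.le) (hGu s hs.1.le) (hGv s hs.1.le)
  have hgronwall := integral_abs_le_mul_exp_of_integral_sign_mul_le (by positivity) hT
    (hu.measurable_uncurry.sub hv.measurable_uncurry)
    ((hu.integrable le_rfl).sub (hv.integrable le_rfl))
    ((hu.integrable_nonlocalField hGmeas T).sub (hv.integrable_nonlocalField hGmeas T))
    (hu.sub_eq_add_integral hv hGmeas T) hdiss
  simpa only [sub_zero, mul_comm] using hgronwall

/-- `L¹`-stability with Gronwall rate `e^{2‖κ_V‖_∞ ℓ t}` for two pointwise solutions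
of the Cauchy problem driven by a skew-symmetric, `ℓ`-dissipative field `G`. -/
theorem L1_stability_of_solutions
    {V : Type*} [MeasurableSpace V]
    (π : Measure V) [IsFiniteMeasure π]
    (κ : Kernel V V) [IsFiniteKernel κ]
    (K : ℝ) (hK0 : 0 ≤ K) (hK : ∀ x, κ x Set.univ ≤ ENNReal.ofReal K)
    (hdb : (π ⊗ₘ κ).map Prod.swap = π ⊗ₘ κ)
    (M : ℝ) (hM : 0 < M)
    (G : V → V → ℝ → ℝ → ℝ)
    (hGmeas : Measurable fun p : (V × V) × ℝ × ℝ => G p.1.1 p.1.2 p.2.1 p.2.2)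
    (hGcont : ∀ x y : V, Continuous fun q : ℝ × ℝ => G x y q.1 q.2)
    (hGbound : ∀ (x y : V) (a b : ℝ), |G x y a b| ≤ M * (1 + |a| + |b|))
    (hGskew : ∀ (x y : V) (a b : ℝ), G x y a b = - G y x b a)
    (ℓ : ℝ) (hℓ : 0 ≤ ℓ)
    (hGdiss : ∀ (x y : V) (a a' b : ℝ), a ≤ a' →
      G x y a' b - G x y a b ≤ ℓ * (a' - a))
    (u v : ℝ → V → ℝ)
    (hu : IsPointwiseSolution π κ G u)
    (hv : IsPointwiseSolution π κ G v) :
    ∀ t : ℝ, 0 ≤ t →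
      ∫ x, |u t x - v t x| ∂π
        ≤ Real.exp (2 * K * ℓ * t) * ∫ x, |u 0 x - v 0 x| ∂π := by
  lift K to ℝ≥0 using hK0
  simp only [ENNReal.ofReal_coe_nnreal] at hK
  exact L1_stability_of_solutions_general π κ K hK hdb G hGmeas hGskew ℓ hℓ hGdiss u v hu hv
    (fun _ ht ↦ integrable_edgeFlux_of_linear_growth hK hdb hGmeas hGbound (hu.integrable ht))
    (fun _ ht ↦ integrable_edgeFlux_of_linear_growth hK hdb hGmeas hGbound (hv.integrable ht))
end

section
/- Let V be a measurable space, π a finite nonnegative measure on V, κ a bounded measurable kernel from V to itself with ‖κ_V‖_∞ := sup_x κ(x,V) < ∞, θ(dx dy) := π(dx)κ(x,dy), and assume detailed balance (θ symmetric under the swap (x,y) ↦ (y,x)). Let D: [0,∞)×[0,∞) → [0,+∞] be convex and lower semicontinuous. Let uₙ, u: V → [0,∞) be π-integrable functions such that ∫_B uₙ dπ → ∫_B u dπ for every measurable B ⊆ V (setwise convergence of the measures uₙ·π to u·π). Then ∬_{V×V} D(u(x),u(y)) θ(dx dy) ≤ liminf_{n→∞} ∬_{V×V} D(uₙ(x),uₙ(y))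 θ(dx dy), where the integrals are taken in [0,+∞]. -/
open MeasureTheory ProbabilityTheory Filter
open scoped ENNReal

open Topology
open scoped NNReal

/-!
A convex lower semicontinuous `Φ ≥ 0` is a countable supremum of positive parts of affine functions
(Hahn–Banach in the epigraph, then the Lindelöf property). For one affine function, setwise
convergence of the integrands gives lower semicontinuity of the integral over every measurable set,
by testing on the set where the limit is nonnegative. Since `A ↦ liminf ∫⁻ x in A, Φ (f i x)` is
superadditive, these bounds can be glued along the sets where the various affine functions are the
largest, which yields the bound for the supremum.

This applies to the pairs `(uₙ(x), uₙ(y))` because both marginals of `θ` are dominated by a multiple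
of `π`: the integral of `uₙ(x)` over `A ⊆ V × V` is then the integral of `uₙ` against a bounded
weight, and setwise convergence extends to bounded weights by the layer cake formula.
-/

section ConvexEnvelope

theorem nonneg_of_forall_lt_add_mul {c k m : ℝ} (h : ∀ t, 0 ≤ t → c < k + m * t) : 0 ≤ m := by
  by_contra! hm
  have hk : c < k := by simpa using h 0 le_rfl
  have hlt := h ((k - c) / -m) (div_nonneg (sub_nonneg.2 hk.le) (neg_nonneg.2 hm.le))
  have hcancel : m * ((k - c) / -m) = c - k := by
    field_simp [hm.ne]
    ring
  linarith

/-- The part over `S` of the epigraph of `Φ`, with real heights: unlike the epigraph in `E × ℝ≥0∞`,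
it lives in a real vector space, where the Hahn–Banach theorem applies. -/
def realEpigraph {E : Type*} (S : Set E) (Φ : E → ℝ≥0∞) : Set (E × ℝ) :=
  {p | 0 ≤ p.2 ∧ p.1 ∈ S ∧ Φ p.1 ≤ ENNReal.ofReal p.2}

theorem mk_toReal_mem_realEpigraph {E : Type*} {S : Set E} {Φ : E → ℝ≥0∞} {x : E} (hx : x ∈ S)
    (hfin : Φ x ≠ ∞) : (x, (Φ x).toReal) ∈ realEpigraph S Φ :=
  ⟨ENNReal.toReal_nonneg, hx, (ENNReal.ofReal_toReal hfin).ge⟩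

theorem isClosed_realEpigraph {E : Type*} [TopologicalSpace E] {S : Set E} {Φ : E → ℝ≥0∞}
    (hS : IsClosed S) (hlsc : LowerSemicontinuousOn Φ S) : IsClosed (realEpigraph S Φ) := by
  have hepi := (lowerSemicontinuousOn_iff_isClosed_epigraph hS).1 hlsc
  exact (isClosed_Ici.preimage continuous_snd).inter
    (hepi.preimage (continuous_id.prodMap ENNReal.continuous_ofReal))

variable {E : Type*} [AddCommGroup E] [Module ℝ E] {S : Set E} {Φ : E → ℝ≥0∞}

theorem convex_realEpigraph (hΦ : ConvexOn ℝ≥0 S Φ) : Convex ℝ (realEpigraph S Φ) := by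
  rintro ⟨x, s⟩ ⟨hs, hx⟩ ⟨y, t⟩ ⟨ht, hy⟩ a b ha hb hab
  lift a to ℝ≥0 using ha
  lift b to ℝ≥0 using hb
  have hmem := hΦ.convex_epigraph (x := (x, ENNReal.ofReal s)) hx
    (y := (y, ENNReal.ofReal t)) hy a.2 b.2 (NNReal.coe_injective hab)
  have hofReal : ENNReal.ofReal (a * s + b * t)
      = a • ENNReal.ofReal s + b • ENNReal.ofReal t := by
    rw [ENNReal.ofReal_add (by positivity) (by positivity), ENNReal.ofReal_mul a.coe_nonneg,
      ENNReal.ofReal_mul b.coe_nonneg, ENNReal.ofReal_coe_nnreal, ENNReal.ofReal_coe_nnreal,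
      ENNReal.smul_def, ENNReal.smul_def, smul_eq_mul, smul_eq_mul]
  refine ⟨add_nonneg (mul_nonneg a.2 hs) (mul_nonneg b.2 ht), hmem.1, ?_⟩
  exact hmem.2.trans_eq hofReal.symm

variable [TopologicalSpace E] [IsTopologicalAddGroup E] [ContinuousSMul ℝ E]
  [LocallyConvexSpace ℝ E]

theorem exists_separating_hyperplane_of_lt (hS : IsClosed S) (hΦ : ConvexOn ℝ≥0 S Φ)
    (hlsc : LowerSemicontinuousOn Φ S) {x : E} {r : ℝ} (hrx : ENNReal.ofReal r < Φ x) :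
    ∃ (φ : E →L[ℝ] ℝ) (m c : ℝ), 0 ≤ m ∧ φ x + m * r < c ∧
      ∀ y ∈ S, Φ y ≠ ∞ → c < φ y + m * (Φ y).toReal := by
  obtain ⟨F, c, hFx, hF⟩ := geometric_hahn_banach_point_closed (convex_realEpigraph hΦ)
    (isClosed_realEpigraph hS hlsc) (x := (x, r)) fun hmem => hmem.2.2.not_gt hrx
  have hsplit : ∀ y s, F (y, s) = F.comp (.inl ℝ E ℝ) y + F (0, 1) * s := fun y s => by
    have hys : (y, s) = (y, 0) + s • ((0, 1) : E × ℝ) := by simp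
    rw [hys, map_add, map_smul, smul_eq_mul, mul_comm]
    rfl
  rcases (realEpigraph S Φ).eq_empty_or_nonempty with hempty | ⟨⟨y₀, s₀⟩, hs₀, hy₀, hle₀⟩
  · exact ⟨0, 0, 1, le_rfl, by simp, fun y hy hfin =>
      (hempty.subset (mk_toReal_mem_realEpigraph hy hfin)).elim⟩
  refine ⟨F.comp (.inl ℝ E ℝ), F (0, 1), c, ?_, hsplit x r ▸ hFx, fun y hy hfin =>
    hsplit y _ ▸ hF _ (mk_toReal_mem_realEpigraph hy hfin)⟩
  refine nonneg_of_forall_lt_add_mul (c := c) (k := F (y₀, s₀)) fun t ht => ?_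
  have hlt := hF (y₀, s₀ + t) ⟨add_nonneg hs₀ ht, hy₀,
    hle₀.trans (ENNReal.ofReal_le_ofReal (le_add_of_nonneg_right ht))⟩
  rwa [hsplit, mul_add, ← add_assoc, ← hsplit] at hlt

theorem exists_affine_le_of_lt (hS : IsClosed S) (hΦ : ConvexOn ℝ≥0 S Φ)
    (hlsc : LowerSemicontinuousOn Φ S) {x : E} {r : ℝ} (hrx : ENNReal.ofReal r < Φ x) :
    ∃ (φ : E →L[ℝ] ℝ) (c : ℝ), (∀ y ∈ S, ENNReal.ofReal (φ y + c) ≤ Φ y) ∧ r < φ x + c := by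
  obtain ⟨φ, m, c, hm, hx, hS⟩ := exists_separating_hyperplane_of_lt hS hΦ hlsc hrx
  -- Tilting the hyperplane by a small `ε` makes it non-vertical; it still lies below the epigraph
  -- because `Φ ≥ 0`.
  obtain ⟨ε, hε, hεr⟩ := exists_pos_mul_lt (sub_pos.2 hx) r
  have hslope : 0 < m + ε := add_pos_of_nonneg_of_pos hm hε
  have hvalue : ∀ y, (-(m + ε)⁻¹ • φ) y + c / (m + ε) = (c - φ y) / (m + ε) := fun y => by
    simp only [smul_apply, smul_eq_mul]
    ring
  refine ⟨-(m + ε)⁻¹ • φ, c / (m + ε), fun y hy => ?_, ?_⟩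
  · by_cases hfin : Φ y = ∞
    · simp [hfin]
    apply ENNReal.ofReal_le_of_le_toReal
    rw [hvalue, div_le_iff₀ hslope]
    nlinarith [hS y hy hfin, mul_nonneg hε.le (ENNReal.toReal_nonneg (a := Φ y))]
  · rw [hvalue, lt_div_iff₀ hslope]
    linarith

theorem exists_countable_affine_iSup_eq [HereditarilyLindelofSpace E] (hS : IsClosed S)
    (hΦ : ConvexOn ℝ≥0 S Φ) (hlsc : LowerSemicontinuousOn Φ S) :
    ∃ A : Set ((E →L[ℝ] ℝ) × ℝ), A.Countable ∧
      ∀ x ∈ S, Φ x = ⨆ a : A, ENNReal.ofReal (a.1.1 x + a.1.2) := by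
  let ev : (E →L[ℝ] ℝ) × ℝ → S → ℝ≥0∞ := fun a y => ENNReal.ofReal (a.1 y + a.2)
  let minorants := {a : (E →L[ℝ] ℝ) × ℝ | ∀ y ∈ S, ENNReal.ofReal (a.1 y + a.2) ≤ Φ y}
  have hlub : IsLUB (ev '' minorants) (S.domRestrict Φ) := by
    refine isLUB_pi.2 fun x => ⟨?_, fun b hb => ?_⟩
    · rintro _ ⟨_, ⟨a, ha, rfl⟩, rfl⟩
      exact ha x x.2
    · refine ENNReal.le_of_forall_nnreal_lt fun r hr => ?_
      obtain ⟨φ, c, hle, hlt⟩ := exists_affine_le_of_lt hS hΦ hlsc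
        (by simpa using hr : ENNReal.ofReal r < Φ x)
      calc (r : ℝ≥0∞) = ENNReal.ofReal r := by simp
        _ ≤ ENNReal.ofReal (φ x + c) := ENNReal.ofReal_le_ofReal hlt.le
        _ ≤ b := hb ⟨_, ⟨(φ, c), hle, rfl⟩, rfl⟩
  have hcont : ∀ f ∈ ev '' minorants, LowerSemicontinuous f := by
    rintro _ ⟨a, -, rfl⟩
    exact (ENNReal.continuous_ofReal.comp (by fun_prop)).lowerSemicontinuous
  obtain ⟨_, hsub, hcount, hlub'⟩ := exists_countable_lowerSemicontinuous_isLUB hcont hlub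
  obtain ⟨A, -, hA⟩ := Set.SurjOn.exists_bijOn_subset hsub
  refine ⟨A, Set.countable_of_injective_of_countable_image hA.injOn (hA.image_eq ▸ hcount),
    fun x hx => ?_⟩
  have hlubx := isLUB_pi.1 hlub' ⟨x, hx⟩
  rw [← hA.image_eq, Set.image_image] at hlubx
  exact hlubx.sSup_eq.symm.trans sSup_image'

end ConvexEnvelope

theorem liminf_add_liminf_le_liminf_add {ι : Type*} {l : Filter ι} (f g : ι → ℝ≥0∞) :
    liminf f l + liminf g l ≤ liminf (fun i => f i + g i) l := by
  simp only [liminf_eq_iSup_iInf]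
  refine ENNReal.biSup_add_biSup_le' ⟨_, univ_mem⟩ ⟨_, univ_mem⟩ fun s hs t ht => ?_
  refine le_iSup₂_of_le (s ∩ t) (inter_mem hs ht) (le_iInf₂ fun i hi => ?_)
  exact add_le_add (iInf₂_le i hi.1) (iInf₂_le i hi.2)

section Superadditive

variable {X κ : Type*} [MeasurableSpace X] {μ : Measure X} {G : κ → X → ℝ≥0∞} {m : Set X → ℝ≥0∞}

theorem setLIntegral_finset_iSup_le_of_superadditive (hG : ∀ k, Measurable (G k))
    (hm : ∀ A B, MeasurableSet A → MeasurableSet B → Disjoint A B → m A + m B ≤ m (A ∪ B))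
    (hGm : ∀ k A, MeasurableSet A → ∫⁻ x in A, G k x ∂μ ≤ m A) (s : Finset κ) {A : Set X}
    (hA : MeasurableSet A) : ∫⁻ x in A, ⨆ k ∈ s, G k x ∂μ ≤ m A := by
  classical
  induction s using Finset.induction generalizing A with
  | empty => simp
  | insert k s _ ih =>
    have hsup : Measurable fun x => ⨆ j ∈ s, G j x :=
      .biSup s s.countable_toSet fun j _ => hG j
    simp only [Finset.iSup_insert, sup_comm (G k _)]
    rw [setLIntegral_max hsup (hG k)]
    have hle := hA.inter (measurableSet_le hsup (hG k))
    have hgt := hA.inter (measurableSet_lt (hG k) hsup)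
    refine (add_le_add (hGm k _ hle) (ih hgt)).trans ((hm _ _ hle hgt ?_).trans_eq ?_)
    · exact Set.disjoint_left.2 fun x hx hx' =>
        not_lt_of_ge (show (⨆ j ∈ s, G j x) ≤ G k x from hx.2) hx'.2
    · rw [← Set.inter_union_distrib_left]
      congr 1
      exact Set.inter_eq_left.2 fun x _ => le_or_gt (⨆ j ∈ s, G j x) (G k x)

theorem lintegral_iSup_le_of_superadditive [Countable κ] (hG : ∀ k, AEMeasurable (G k) μ)
    (hm : ∀ A B, MeasurableSet A → MeasurableSet B → Disjoint A B → m A + m B ≤ m (A ∪ B))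
    (hGm : ∀ k A, MeasurableSet A → ∫⁻ x in A, G k x ∂μ ≤ m A) :
    ∫⁻ x, ⨆ k, G k x ∂μ ≤ m Set.univ := by
  have hmk : ∀ᵐ x ∂μ, ∀ k, G k x = (hG k).mk (G k) x := ae_all_iff.2 fun k => (hG k).ae_eq_mk
  have hdir : Directed (· ≤ ·) fun (s : Finset κ) x => ⨆ k ∈ s, (hG k).mk (G k) x :=
    Monotone.directed_le fun s t hst x => biSup_mono fun k hk => Finset.mem_of_subset hst hk
  have hmeas : ∀ s : Finset κ, Measurable fun x => ⨆ k ∈ s, (hG k).mk (G k) x := fun s =>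
    .biSup s s.countable_toSet fun k _ => (hG k).measurable_mk
  calc ∫⁻ x, ⨆ k, G k x ∂μ = ∫⁻ x, ⨆ k, (hG k).mk (G k) x ∂μ :=
        lintegral_congr_ae (hmk.mono fun x hx => iSup_congr hx)
    _ = ⨆ s : Finset κ, ∫⁻ x, ⨆ k ∈ s, (hG k).mk (G k) x ∂μ := by
        simp_rw [fun x => iSup_eq_iSup_finset fun k => (hG k).mk (G k) x]
        exact lintegral_iSup_directed (fun s => (hmeas s).aemeasurable) hdir
    _ ≤ m Set.univ := iSup_le fun s => by
        rw [← setLIntegral_univ]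
        refine setLIntegral_finset_iSup_le_of_superadditive (fun k => (hG k).measurable_mk) hm
          (fun k A hA => ?_) s .univ
        exact (lintegral_congr_ae (ae_restrict_of_ae (hG k).ae_eq_mk)).symm.trans_le (hGm k A hA)

end Superadditive

section WeightedIntegral

variable {X : Type*} [MeasurableSpace X] {μ : Measure X}

theorem ofReal_integral_le_lintegral_ofReal {f : X → ℝ} (hf : Integrable f μ) :
    ENNReal.ofReal (∫ x, f x ∂μ) ≤ ∫⁻ x, ENNReal.ofReal (f x) ∂μ := by
  rw [integral_eq_lintegral_pos_part_sub_lintegral_neg_part hf]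
  exact (ENNReal.ofReal_le_ofReal (sub_le_self _ ENNReal.toReal_nonneg)).trans
    ENNReal.ofReal_toReal_le

theorem integral_mul_eq_integral_Ioc_setIntegral {w u : X → ℝ} {C : ℝ} (hw : Measurable w)
    (hw₀ : ∀ᵐ x ∂μ, 0 ≤ w x) (hwC : ∀ᵐ x ∂μ, w x ≤ C) (hu : Integrable u μ)
    (hu₀ : ∀ᵐ x ∂μ, 0 ≤ u x) :
    ∫ x, w x * u x ∂μ = ∫ t in Set.Ioc 0 C, ∫ x in {x | t ≤ w x}, u x ∂μ := by
  set ν := μ.withDensity fun x => ENNReal.ofReal (u x) with hν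
  have : IsFiniteMeasure ν := isFiniteMeasure_withDensity_ofReal hu.2
  have hac : ν ≪ μ := withDensity_absolutelyContinuous _ _
  have hwν : Integrable w ν := by
    refine .of_bound hw.aestronglyMeasurable C (hac.ae_le ?_)
    filter_upwards [hw₀, hwC] with x h₀ hC
    rwa [Real.norm_of_nonneg h₀]
  have hνreal : ∀ A, MeasurableSet A → ν.real A = ∫ x in A, u x ∂μ := fun A hA => by
    rw [Measure.real, hν, withDensity_apply _ hA, integral_eq_lintegral_of_nonneg_ae
      (ae_restrict_of_ae hu₀) hu.1.restrict]
  calc ∫ x, w x * u x ∂μ = ∫ x, w x ∂ν := by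
        rw [hν, integral_withDensity_eq_integral_toReal_smul₀
          hu.1.aemeasurable.ennreal_ofReal (by simp)]
        refine integral_congr_ae (hu₀.mono fun x hx => ?_)
        simp only [ENNReal.toReal_ofReal hx, smul_eq_mul, mul_comm]
    _ = ∫ t in Set.Ioc 0 C, ν.real {x | t ≤ w x} :=
        hwν.integral_eq_integral_Ioc_meas_le (hac.ae_le hw₀) (hac.ae_le hwC)
    _ = ∫ t in Set.Ioc 0 C, ∫ x in {x | t ≤ w x}, u x ∂μ := by
        simp only [hνreal _ (measurableSet_le measurable_const hw)]

theorem antitone_setIntegral_superlevel {R : Type*} [Preorder R] (w : X → R) {u : X → ℝ}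
    (hu : Integrable u μ) (hu₀ : ∀ᵐ x ∂μ, 0 ≤ u x) :
    Antitone fun t => ∫ x in {x | t ≤ w x}, u x ∂μ := fun _ _ hst =>
  setIntegral_mono_set hu.integrableOn (ae_restrict_of_ae hu₀)
    (.of_forall fun _ hx => hst.trans hx)

end WeightedIntegral

/-- Setwise convergence along `l` of the vector measures `f i · μ` to `g · μ`, stated through their
densities. The integrals are Bochner integrals, so this is meaningful only for integrable `f i` and
`g`; integrability is left to the lemmas. -/
def TendstoSetwise {X E ι : Type*} [MeasurableSpace X] [NormedAddCommGroup E] [NormedSpace ℝ E]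
    (μ : Measure X) (f : ι → X → E) (l : Filter ι) (g : X → E) : Prop :=
  ∀ A, MeasurableSet A → Tendsto (fun i => ∫ x in A, f i x ∂μ) l (𝓝 (∫ x in A, g x ∂μ))

namespace TendstoSetwise

variable {X E F ι : Type*} [MeasurableSpace X] [NormedAddCommGroup E] [NormedSpace ℝ E]
  [NormedAddCommGroup F] [NormedSpace ℝ F]
  {μ : Measure X} {f : ι → X → E} {l : Filter ι} {g : X → E}

theorem tendsto_of_nullMeasurableSet (h : TendstoSetwise μ f l g) {A : Set X}
    (hA : NullMeasurableSet A μ) :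
    Tendsto (fun i => ∫ x in A, f i x ∂μ) l (𝓝 (∫ x in A, g x ∂μ)) := by
  simpa only [setIntegral_congr_set hA.toMeasurable_ae_eq]
    using h _ (measurableSet_toMeasurable μ A)

theorem restrict (h : TendstoSetwise μ f l g) {A : Set X} (hA : MeasurableSet A) :
    TendstoSetwise (μ.restrict A) f l g := fun B hB => by
  simpa only [Measure.restrict_restrict hB] using h _ (hB.inter hA)

theorem smul_measure (h : TendstoSetwise μ f l g) (c : ℝ≥0) : TendstoSetwise (c • μ) f l g :=
  fun B hB => by
    simpa only [Measure.restrict_smul, integral_smul_nnreal_measure] using (h B hB).const_smul c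

theorem prodMk [CompleteSpace E] [CompleteSpace F] {f' : ι → X → F} {g' : X → F}
    (h : TendstoSetwise μ f l g) (h' : TendstoSetwise μ f' l g')
    (hf : ∀ i, Integrable (f i) μ) (hf' : ∀ i, Integrable (f' i) μ) (hg : Integrable g μ)
    (hg' : Integrable g' μ) :
    TendstoSetwise μ (fun i x => (f i x, f' i x)) l fun x => (g x, g' x) := fun A hA => by
  simpa only [integral_pair (hf _).integrableOn (hf' _).integrableOn,
    integral_pair hg.integrableOn hg'.integrableOn] using (h A hA).prodMk_nhds (h' A hA)

theorem clm_add_const [CompleteSpace E] [IsFiniteMeasure μ] (h : TendstoSetwise μ f l g)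
    (hf : ∀ i, Integrable (f i) μ) (hg : Integrable g μ) (φ : E →L[ℝ] ℝ) (c : ℝ) :
    TendstoSetwise μ (fun i x => φ (f i x) + c) l fun x => φ (g x) + c := fun A hA => by
  have hint : ∀ w : X → E, Integrable w μ →
      ∫ x in A, (φ (w x) + c) ∂μ = φ (∫ x in A, w x ∂μ) + ∫ _ in A, c ∂μ := fun w hw => by
    rw [integral_add (φ.integrable_comp hw.integrableOn) (integrable_const c),
      φ.integral_comp_comm hw.integrableOn]
  simpa only [hint _ (hf _), hint _ hg, Function.comp_apply] using
    ((φ.continuous.tendsto _).comp (h A hA)).add_const (∫ _ in A, c ∂μ)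

theorem lintegral_ofReal_le_liminf [l.NeBot] {f : ι → X → ℝ} {g : X → ℝ}
    (h : TendstoSetwise μ f l g) (hf : ∀ i, Integrable (f i) μ) (hg : Integrable g μ) :
    ∫⁻ x, ENNReal.ofReal (g x) ∂μ ≤ liminf (fun i => ∫⁻ x, ENNReal.ofReal (f i x) ∂μ) l := by
  set P := {x | 0 ≤ g x}
  have hP : NullMeasurableSet P μ := nullMeasurableSet_le aemeasurable_const hg.1.aemeasurable
  have hgP : ∫⁻ x, ENNReal.ofReal (g x) ∂μ = ENNReal.ofReal (∫ x in P, g x ∂μ) := by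
    have hpos : 0 ≤ᵐ[μ.restrict P] g := ae_restrict_mem₀ hP
    rw [ofReal_integral_eq_lintegral_ofReal hg.integrableOn hpos, ← lintegral_indicator₀ hP,
      Set.indicator_eq_self.2 fun x hx => ?_]
    exact (ENNReal.ofReal_pos.1 (pos_iff_ne_zero.2 hx)).le
  rw [hgP, ← (ENNReal.tendsto_ofReal (h.tendsto_of_nullMeasurableSet hP)).liminf_eq]
  refine liminf_le_liminf (.of_forall fun i => ?_)
  exact (ofReal_integral_le_lintegral_ofReal (hf i).integrableOn).trans
    (setLIntegral_le_lintegral _ _)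

theorem tendsto_integral_mul [l.IsCountablyGenerated] {u : ι → X → ℝ} {v : X → ℝ}
    (h : TendstoSetwise μ u l v) (hu : ∀ i, Integrable (u i) μ) (hu₀ : ∀ i, ∀ᵐ x ∂μ, 0 ≤ u i x)
    (hv : Integrable v μ) (hv₀ : ∀ᵐ x ∂μ, 0 ≤ v x) {w : X → ℝ} {C : ℝ} (hw : Measurable w)
    (hw₀ : ∀ᵐ x ∂μ, 0 ≤ w x) (hwC : ∀ᵐ x ∂μ, w x ≤ C) :
    Tendsto (fun i => ∫ x, w x * u i x ∂μ) l (𝓝 (∫ x, w x * v x ∂μ)) := by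
  simp only [integral_mul_eq_integral_Ioc_setIntegral hw hw₀ hwC (hu _) (hu₀ _),
    integral_mul_eq_integral_Ioc_setIntegral hw hw₀ hwC hv hv₀]
  have hmass : ∀ᶠ i in l, ∫ x, u i x ∂μ < ∫ x, v x ∂μ + 1 := by
    simpa only [setIntegral_univ] using (h _ .univ).eventually_lt_const (by simp)
  refine tendsto_integral_filter_of_dominated_convergence (fun _ => ∫ x, v x ∂μ + 1)
    (.of_forall fun i => ?_) ?_ (integrable_const _)
    (.of_forall fun t => h _ (measurableSet_le measurable_const hw))
  · exact (antitone_setIntegral_superlevel w (hu i) (hu₀ i)).measurable.aestronglyMeasurable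
  · filter_upwards [hmass] with i hi
    refine .of_forall fun t => ?_
    rw [Real.norm_of_nonneg (setIntegral_nonneg_of_ae (hu₀ i))]
    exact (setIntegral_le_integral (hu i) (hu₀ i)).trans hi.le

theorem comp {Y : Type*} [MeasurableSpace Y] {θ : Measure Y} [SigmaFinite μ]
    [l.IsCountablyGenerated] {u : ι → X → ℝ} {v : X → ℝ}
    (h : TendstoSetwise μ u l v) (hu : ∀ i, Integrable (u i) μ) (hu₀ : ∀ i, ∀ᵐ x ∂μ, 0 ≤ u i x)
    (hv : Integrable v μ) (hv₀ : ∀ᵐ x ∂μ, 0 ≤ v x) {T : Y → X} (hT : Measurable T)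
    (hθ : θ.map T ≤ μ) : TendstoSetwise θ (fun i y => u i (T y)) l fun y => v (T y) :=
  fun A _ => by
    set ν := (θ.restrict A).map T
    have hνμ : ν ≤ μ := (Measure.map_mono Measure.restrict_le_self hT).trans hθ
    have : SigmaFinite ν := Measure.sigmaFinite_of_le μ hνμ
    have hdensity : ∀ w : X → ℝ, Integrable w μ →
        ∫ y in A, w (T y) ∂θ = ∫ x, (ν.rnDeriv μ x).toReal * w x ∂μ := fun w hw => by
      rw [← integral_map hT.aemeasurable (hw.mono_measure hνμ).1]
      exact (integral_rnDeriv_smul hνμ.absolutelyContinuous).symm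
    simp only [hdensity _ (hu _), hdensity _ hv]
    refine h.tendsto_integral_mul hu hu₀ hv hv₀ (Measure.measurable_rnDeriv ν μ).ennreal_toReal
      (.of_forall fun _ => ENNReal.toReal_nonneg) (C := 1) ?_
    filter_upwards [Measure.rnDeriv_le_one_of_le hνμ] with x hx
    exact ENNReal.toReal_le_of_le_ofReal zero_le_one (by simpa using hx)

variable [CompleteSpace E] [HereditarilyLindelofSpace E] [l.NeBot] {S : Set E} {Φ : E → ℝ≥0∞}

theorem lintegral_le_liminf_of_isFiniteMeasure [IsFiniteMeasure μ]
    (h : TendstoSetwise μ f l g) (hf : ∀ i, Integrable (f i) μ) (hg : Integrable g μ)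
    (hfS : ∀ i, ∀ᵐ x ∂μ, f i x ∈ S) (hgS : ∀ᵐ x ∂μ, g x ∈ S) (hS : IsClosed S)
    (hΦ : ConvexOn ℝ≥0 S Φ) (hlsc : LowerSemicontinuousOn Φ S) :
    ∫⁻ x, Φ (g x) ∂μ ≤ liminf (fun i => ∫⁻ x, Φ (f i x) ∂μ) l := by
  obtain ⟨A, hA, hsup⟩ := exists_countable_affine_iSup_eq hS hΦ hlsc
  have : Countable A := hA
  have haffine : ∀ (a : A) w, Integrable w μ → Integrable (fun x => a.1.1 (w x) + a.1.2) μ :=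
    fun a w hw => (a.1.1.integrable_comp hw).add (integrable_const _)
  calc ∫⁻ x, Φ (g x) ∂μ = ∫⁻ x, ⨆ a : A, ENNReal.ofReal (a.1.1 (g x) + a.1.2) ∂μ :=
        lintegral_congr_ae (hgS.mono fun x hx => hsup _ hx)
    _ ≤ liminf (fun i => ∫⁻ x in Set.univ, Φ (f i x) ∂μ) l :=
        lintegral_iSup_le_of_superadditive
          (m := fun B => liminf (fun i => ∫⁻ x in B, Φ (f i x) ∂μ) l)
          (fun a => (haffine a g hg).1.aemeasurable.ennreal_ofReal) (fun B B' _ hB' hBB' => ?_)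
          fun a B hB => ?_
    _ = liminf (fun i => ∫⁻ x, Φ (f i x) ∂μ) l := by simp only [setLIntegral_univ]
  · simpa only [lintegral_union hB' hBB'] using liminf_add_liminf_le_liminf_add _ _
  · refine (((h.clm_add_const hf hg a.1.1 a.1.2).restrict hB).lintegral_ofReal_le_liminf
      (fun i => (haffine a _ (hf i)).restrict) (haffine a g hg).restrict).trans
      (liminf_le_liminf (.of_forall fun i => lintegral_mono_ae ?_))
    filter_upwards [ae_restrict_of_ae (hfS i)] with x hx
    rw [hsup _ hx]
    exact le_iSup (fun b : A => ENNReal.ofReal (b.1.1 (f i x) + b.1.2)) a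

theorem lintegral_le_liminf [SigmaFinite μ]
    (h : TendstoSetwise μ f l g) (hf : ∀ i, Integrable (f i) μ) (hg : Integrable g μ)
    (hfS : ∀ i, ∀ᵐ x ∂μ, f i x ∈ S) (hgS : ∀ᵐ x ∂μ, g x ∈ S) (hS : IsClosed S)
    (hΦ : ConvexOn ℝ≥0 S Φ) (hlsc : LowerSemicontinuousOn Φ S) :
    ∫⁻ x, Φ (g x) ∂μ ≤ liminf (fun i => ∫⁻ x, Φ (f i x) ∂μ) l := by
  refine lintegral_le_of_forall_fin_meas_le _ fun A hA hfin => ?_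
  have : IsFiniteMeasure (μ.restrict A) := isFiniteMeasure_restrict.2 hfin
  calc ∫⁻ x in A, Φ (g x) ∂μ ≤ liminf (fun i => ∫⁻ x in A, Φ (f i x) ∂μ) l :=
        (h.restrict hA).lintegral_le_liminf_of_isFiniteMeasure (fun i => (hf i).restrict)
          hg.restrict (fun i => ae_restrict_of_ae (hfS i)) (ae_restrict_of_ae hgS) hS hΦ hlsc
    _ ≤ liminf (fun i => ∫⁻ x, Φ (f i x) ∂μ) l :=
        liminf_le_liminf (.of_forall fun i => setLIntegral_le_lintegral _ _)

end TendstoSetwise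

section PairFunctional

variable {V : Type*} [MeasurableSpace V] {D : ℝ → ℝ → ℝ≥0∞}

theorem convexOn_quadrant_of_forall
    (hD : ∀ u v u' v' t : ℝ, 0 ≤ u → 0 ≤ v → 0 ≤ u' → 0 ≤ v' → 0 ≤ t → t ≤ 1 →
      D (t * u + (1 - t) * u') (t * v + (1 - t) * v')
        ≤ ENNReal.ofReal t * D u v + ENNReal.ofReal (1 - t) * D u' v') :
    ConvexOn ℝ≥0 (Set.Ici 0 ×ˢ Set.Ici 0) fun p : ℝ × ℝ => D p.1 p.2 := by
  refine ⟨?_, fun p hp q hq a b _ _ hab => ?_⟩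
  · exact (convex_Ici (𝕜 := ℝ≥0) (0 : ℝ)).prod (convex_Ici 0)
  · have hb : 1 - (a : ℝ) = b := by
      rw [← NNReal.coe_one, ← hab, NNReal.coe_add, add_sub_cancel_left]
    have ha : (a : ℝ) ≤ 1 := sub_nonneg.1 (hb ▸ b.coe_nonneg)
    have hle := hD p.1 p.2 q.1 q.2 a hp.1 hp.2 hq.1 hq.2 a.coe_nonneg ha
    rwa [hb, ENNReal.ofReal_coe_nnreal, ENNReal.ofReal_coe_nnreal] at hle

theorem fst_compProd_le_bound_smul {W : Type*} [MeasurableSpace W] (π : Measure V) [SFinite π]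
    (κ : Kernel V W) [IsFiniteKernel κ] : (π ⊗ₘ κ).fst ≤ κ.bound.toNNReal • π := by
  refine Measure.le_iff.2 fun A hA => ?_
  rw [Measure.fst_apply hA, Measure.compProd_apply (measurable_fst hA)]
  calc ∫⁻ x, κ x (Prod.mk x ⁻¹' (Prod.fst ⁻¹' A)) ∂π
      ≤ ∫⁻ x, A.indicator (fun _ => κ.bound) x ∂π := lintegral_mono fun x => by
        by_cases hx : x ∈ A
        · simpa only [Set.indicator_of_mem hx] using κ.measure_le_bound x _
        · simp [← Set.preimage_comp, Function.comp_def, hx]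
    _ = (κ.bound.toNNReal • π) A := by
        rw [lintegral_indicator_const hA, Measure.smul_apply, ENNReal.smul_def,
          ENNReal.coe_toNNReal κ.bound_ne_top, smul_eq_mul]

variable {ι : Type*} {l : Filter ι} [l.NeBot] [l.IsCountablyGenerated] {π : Measure V}
  [SigmaFinite π] {θ : Measure (V × V)} {u : ι → V → ℝ} {ulim : V → ℝ}

theorem TendstoSetwise.lintegral_pair_le_liminf (h : TendstoSetwise π u l ulim)
    (hu : ∀ i, Integrable (u i) π) (hu₀ : ∀ i, ∀ᵐ x ∂π, 0 ≤ u i x) (hulim : Integrable ulim π)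
    (hulim₀ : ∀ᵐ x ∂π, 0 ≤ ulim x) (hfst : θ.fst ≤ π) (hsnd : θ.snd ≤ π)
    (hD : ConvexOn ℝ≥0 (Set.Ici 0 ×ˢ Set.Ici 0) fun p : ℝ × ℝ => D p.1 p.2)
    (hlsc : LowerSemicontinuousOn (fun p : ℝ × ℝ => D p.1 p.2) (Set.Ici 0 ×ˢ Set.Ici 0)) :
    ∫⁻ p, D (ulim p.1) (ulim p.2) ∂θ ≤ liminf (fun i => ∫⁻ p, D (u i p.1) (u i p.2) ∂θ) l := by
  have : SigmaFinite θ := .of_map θ measurable_fst.aemeasurable (Measure.sigmaFinite_of_le π hfst)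
  have hint₁ : ∀ {w : V → ℝ}, Integrable w π → Integrable (fun p => w p.1) θ := fun hw =>
    (hw.mono_measure hfst).comp_measurable measurable_fst
  have hint₂ : ∀ {w : V → ℝ}, Integrable w π → Integrable (fun p => w p.2) θ := fun hw =>
    (hw.mono_measure hsnd).comp_measurable measurable_snd
  have hquadrant : ∀ {w : V → ℝ}, (∀ᵐ x ∂π, 0 ≤ w x) →
      ∀ᵐ p ∂θ, (w p.1, w p.2) ∈ Set.Ici (0 : ℝ) ×ˢ Set.Ici (0 : ℝ) := fun hw =>
    (ae_of_ae_map measurable_fst.aemeasurable (ae_mono hfst hw)).and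
      (ae_of_ae_map measurable_snd.aemeasurable (ae_mono hsnd hw))
  have hpair := (h.comp hu hu₀ hulim hulim₀ measurable_fst hfst).prodMk
    (h.comp hu hu₀ hulim hulim₀ measurable_snd hsnd) (fun i => hint₁ (hu i))
    (fun i => hint₂ (hu i)) (hint₁ hulim) (hint₂ hulim)
  exact hpair.lintegral_le_liminf (fun i => (hint₁ (hu i)).prodMk (hint₂ (hu i)))
    ((hint₁ hulim).prodMk (hint₂ hulim)) (fun i => hquadrant (hu₀ i)) (hquadrant hulim₀)
    (isClosed_Ici.prod isClosed_Ici) hD hlsc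

theorem fisher_information_lsc_general {C : ℝ≥0} (hfst : θ.fst ≤ C • π) (hsnd : θ.snd ≤ C • π)
    (hDconv : ConvexOn ℝ≥0 (Set.Ici 0 ×ˢ Set.Ici 0) fun p : ℝ × ℝ => D p.1 p.2)
    (hDlsc : LowerSemicontinuousOn (fun p : ℝ × ℝ => D p.1 p.2) (Set.Ici 0 ×ˢ Set.Ici 0))
    (hu₀ : ∀ i, ∀ᵐ x ∂π, 0 ≤ u i x) (hu : ∀ i, Integrable (u i) π)
    (hulim₀ : ∀ᵐ x ∂π, 0 ≤ ulim x) (hulim : Integrable ulim π)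
    (hsetwise : TendstoSetwise π u l ulim) :
    ∫⁻ p, D (ulim p.1) (ulim p.2) ∂θ ≤ liminf (fun i => ∫⁻ p, D (u i p.1) (u i p.2) ∂θ) l :=
  (hsetwise.smul_measure C).lintegral_pair_le_liminf (fun i => (hu i).smul_measure_nnreal)
    (fun i => Measure.ae_smul_measure (hu₀ i) C) hulim.smul_measure_nnreal
    (Measure.ae_smul_measure hulim₀ C) hfst hsnd hDconv hDlsc

end PairFunctional

/-- Lower semicontinuity of the Fisher-information-type functional
`ρ = u·π ↦ ∬ D(u(x),u(y)) θ(dx dy)` with respect to setwise convergence of the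
measures `uₙ·π`, for convex lower semicontinuous `D : [0,∞)² → [0,+∞]`. -/
theorem fisher_information_lsc
    {V : Type*} [MeasurableSpace V]
    (π : Measure V) [IsFiniteMeasure π]
    (κ : Kernel V V) [IsFiniteKernel κ]
    (hdb : (π ⊗ₘ κ).map Prod.swap = π ⊗ₘ κ)
    (D : ℝ → ℝ → ℝ≥0∞)
    (hDconv : ∀ u v u' v' t : ℝ, 0 ≤ u → 0 ≤ v → 0 ≤ u' → 0 ≤ v' →
      0 ≤ t → t ≤ 1 →
      D (t * u + (1 - t) * u') (t * v + (1 - t) * v')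
        ≤ ENNReal.ofReal t * D u v + ENNReal.ofReal (1 - t) * D u' v')
    (hDlsc : LowerSemicontinuousOn (fun p : ℝ × ℝ => D p.1 p.2)
      (Set.Ici (0:ℝ) ×ˢ Set.Ici (0:ℝ)))
    (u : ℕ → V → ℝ) (ulim : V → ℝ)
    (humeas : ∀ n, Measurable (u n)) (hunonneg : ∀ n x, 0 ≤ u n x)
    (huint : ∀ n, Integrable (u n) π)
    (hlimmeas : Measurable ulim) (hlimnonneg : ∀ x, 0 ≤ ulim x)
    (hlimint : Integrable ulim π)
    (hsetwise : ∀ B : Set V, MeasurableSet B →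
      Tendsto (fun n => ∫ x in B, u n x ∂π) atTop (nhds (∫ x in B, ulim x ∂π))) :
    ∫⁻ p : V × V, D (ulim p.1) (ulim p.2) ∂(π ⊗ₘ κ)
      ≤ liminf (fun n => ∫⁻ p : V × V, D (u n p.1) (u n p.2) ∂(π ⊗ₘ κ)) atTop := by
  have hfst := fst_compProd_le_bound_smul π κ
  have hsnd : (π ⊗ₘ κ).snd = (π ⊗ₘ κ).fst := by rw [← Measure.snd_map_swap, hdb]
  exact fisher_information_lsc_general hfst (hsnd.trans_le hfst)
    (convexOn_quadrant_of_forall hDconv) hDlsc (fun n => .of_forall (hunonneg n)) huint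
    (.of_forall hlimnonneg) hlimint hsetwise
end

section
/- Let V be a separable metrizable topological space endowed with its Borel σ-algebra and let I = [a,b] ⊂ ℝ. Let (ρ_t)_{t∈I} be a family of finite nonnegative Borel measures on V and (j_t)_{t∈I} a family of finite nonnegative measures on V×V, such that t ↦ ρ_t(B) and t ↦ j_t(C) are Lebesgue measurable for all measurable B ⊆ V, C ⊆ V×V, and ∫_a^b ρ_t(V) dt < ∞ and ∫_a^b j_t(V×V) dt < ∞. Assume that for every η ∈ C_c^∞((a,b)) and every bounded continuous ζ: V → ℝ: −∫_a^b η'(t) (∫_V ζ dρ_t) dt = ∫_a^b η(t) (∬_{V×V} (ζ(y) − ζ(x)) j_t(dx dy)) dt. Then there exists a unique curve t ↦ ρ̃_t of finite nonnegative measures on I such that ρ̃_t = ρ_t for a.e. t ∈ I and ρ̃ is continuous in the total variation norm; moreover ‖ρ̃_{t₂} − ρ̃_{t₁}‖_TV ≤ 2 ∫_{t₁}^{t₂} j_t(V×V) dt for all a ≤ t₁ ≤ t₂ ≤ b, and for every bounded Borel measurable φ: V → ℝ and all a ≤ t₁ ≤ t₂ ≤ b: ∫_V φ dρ̃_{t₂}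 − ∫_V φ dρ̃_{t₁} = ∫_{t₁}^{t₂} ∬_{V×V} (φ(y) − φ(x)) j_t(dx dy) dt. -/
open MeasureTheory Filter Set
open scoped ENNReal

/-- The total variation distance between two (nonnegative) measures, expressed via
the lattice subtraction of measures: `‖μ − ν‖_TV = (μ − ν)(Y) + (ν − μ)(Y)`. -/
noncomputable def tvDist {Y : Type*} [MeasurableSpace Y]
    (μ ν : MeasureTheory.Measure Y) : ℝ≥0∞ :=
  (μ - ν) Set.univ + (ν - μ) Set.univ

/-!
By the du Bois-Reymond lemma, `t ↦ ∫ ζ dρ_t` agrees a.e. with `c_ζ + ∫_a^t ∫ (ζ(y) - ζ(x)) dj_s ds`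
for every bounded continuous `ζ`. Averaging over time exhibits `c_ζ` as the difference of the
integrals of `ζ` against two finite measures `m` and `n` not depending on `ζ`. Bounded continuous
functions determine a finite measure and the σ-algebra of `V` is countably generated, so a single
null set of times serves all `ζ`: for a.e. `t`,
`ρ_t + (n + ∫_a^t q_s ds) = m + ∫_a^t p_s ds`,
where `p` (gain) and `q` (loss) are the second and first marginals of `j`. Hence
`n + ∫_a^t q ≤ m + ∫_a^t p` for a.e. `t`, and for all `t` because both sides are continuous in total
variation. The representative is the difference of the two sides; the total variation estimate and
the integrated equation against bounded Borel functions are read off from the identity of measures.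
-/

open TopologicalSpace ProbabilityTheory
open scoped Topology Distributions BoundedContinuousFunction

section WeakDerivative

variable {a b : ℝ} {f' g' f g : ℝ → ℝ}

/-- The open interval `(a, b)` as an open set, the domain of the test functions in time. -/
def openInterval (a b : ℝ) : Opens ℝ := ⟨Ioo a b, isOpen_Ioo⟩

/-- `g` is the distributional derivative of `f` on `(a, b)`. Integrals of non-integrable functions
are `0`, so this is meaningful for `f` and `g` integrable on `[a, b]`. -/
def IsWeakDerivOn (a b : ℝ) (f g : ℝ → ℝ) : Prop :=
  ∀ η : 𝓓(openInterval a b, ℝ),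
    -∫ t in Icc a b, deriv η t * f t = ∫ t in Icc a b, η t * g t

lemma testFunction_eq_zero_of_notMem_Ioo (η : 𝓓(openInterval a b, ℝ)) {t : ℝ} (ht : t ∉ Ioo a b) :
    η t = 0 :=
  image_eq_zero_of_notMem_tsupport fun h ↦ ht (η.tsupport_subset h)

lemma setIntegral_Icc_testFunction_mul (η : 𝓓(openInterval a b, ℝ)) (f : ℝ → ℝ) :
    ∫ t in Icc a b, η t * f t = ∫ t, η t * f t :=
  setIntegral_eq_integral_of_forall_compl_eq_zero fun t ht ↦ by
    rw [testFunction_eq_zero_of_notMem_Ioo η fun h ↦ ht (Ioo_subset_Icc_self h), zero_mul]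

lemma integrable_testFunction (η : 𝓓(openInterval a b, ℝ)) : Integrable η :=
  η.continuous.integrable_of_hasCompactSupport η.hasCompactSupport

lemma integrableOn_testFunction_mul (hf : IntegrableOn f (Icc a b))
    (η : 𝓓(openInterval a b, ℝ)) : IntegrableOn (fun t ↦ η t * f t) (Icc a b) :=
  hf.continuousOn_mul η.continuous.continuousOn isCompact_Icc

lemma integrableOn_deriv_testFunction_mul (hf : IntegrableOn f (Icc a b))
    (η : 𝓓(openInterval a b, ℝ)) : IntegrableOn (fun t ↦ deriv η t * f t) (Icc a b) :=
  hf.continuousOn_mul (η.contDiff.continuous_deriv (by simp)).continuousOn isCompact_Icc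

lemma exists_testFunction_integral_eq_one (hab : a < b) :
    ∃ χ : 𝓓(openInterval a b, ℝ), ∫ t, χ t = 1 := by
  let bump : ContDiffBump ((a + b) / 2 : ℝ) := ⟨(b - a) / 8, (b - a) / 4, by linarith, by linarith⟩
  refine ⟨⟨bump.normed volume, bump.contDiff_normed, bump.hasCompactSupport_normed, ?_⟩,
    bump.integral_normed⟩
  have hrOut : bump.rOut = (b - a) / 4 := rfl
  rw [bump.tsupport_normed_eq, Real.closedBall_eq_Icc, hrOut]
  exact Icc_subset_Ioo (by linarith) (by linarith)

lemma exists_Icc_superset_of_isCompact_of_subset_Ioo {K : Set ℝ} (hK : IsCompact K)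
    (hKab : K ⊆ Ioo a b) : ∃ c d, K ⊆ Icc c d ∧ Icc c d ⊆ Ioo a b := by
  rcases K.eq_empty_or_nonempty with rfl | hne
  · exact ⟨1, 0, empty_subset _, by simp⟩
  · obtain ⟨c, hc⟩ := hK.exists_isLeast hne
    obtain ⟨d, hd⟩ := hK.exists_isGreatest hne
    exact ⟨c, d, fun t ht ↦ ⟨hc.2 ht, hd.2 ht⟩, Icc_subset_Ioo (hKab hc.1).1 (hKab hd.1).2⟩

lemma hasDerivAt_setIntegral_Iic {ψ : ℝ → ℝ} (hψ : Continuous ψ) (hint : Integrable ψ) (t : ℝ) :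
    HasDerivAt (fun t ↦ ∫ s in Iic t, ψ s) (ψ t) t := by
  have hsplit : (fun t ↦ ∫ s in Iic t, ψ s) = fun t ↦ (∫ s in Iic 0, ψ s) + ∫ s in 0..t, ψ s := by
    funext t
    rw [← intervalIntegral.integral_Iic_sub_Iic hint.integrableOn hint.integrableOn,
      add_sub_cancel]
  rw [hsplit]
  exact (hψ.integral_hasStrictDerivAt 0 t).hasDerivAt.const_add _

lemma exists_testFunction_deriv_eq (ψ : 𝓓(openInterval a b, ℝ)) (hψ : ∫ t, ψ t = 0) :
    ∃ η : 𝓓(openInterval a b, ℝ), deriv η = ψ := by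
  obtain ⟨c, d, hcd, hsub⟩ :=
    exists_Icc_superset_of_isCompact_of_subset_Ioo ψ.hasCompactSupport ψ.tsupport_subset
  have hzero : ∀ t ∉ Icc c d, ψ t = 0 := fun t ht ↦
    image_eq_zero_of_notMem_tsupport fun h ↦ ht (hcd h)
  let η : ℝ → ℝ := fun t ↦ ∫ s in Iic t, ψ s
  have hderiv : ∀ t, HasDerivAt η (ψ t) t :=
    hasDerivAt_setIntegral_Iic ψ.continuous (integrable_testFunction ψ)
  have hderiv_eq : deriv η = ψ := funext fun t ↦ (hderiv t).deriv
  have hsupp : tsupport η ⊆ Icc c d := by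
    refine closure_minimal (fun t ht ↦ by_contra fun htcd ↦ ht ?_) isClosed_Icc
    rcases lt_or_ge t c with htc | hct
    · exact setIntegral_eq_zero_of_forall_eq_zero fun s hs ↦
        hzero s fun h ↦ ((mem_Iic.1 hs).trans_lt htc).not_ge h.1
    · have hdt : d < t := not_le.1 fun htd ↦ htcd ⟨hct, htd⟩
      rw [← hψ]
      exact setIntegral_eq_integral_of_forall_compl_eq_zero fun s hs ↦
        hzero s fun h ↦ hs (h.2.trans hdt.le)
  refine ⟨⟨η, ?_, isCompact_Icc.of_isClosed_subset (isClosed_tsupport η) hsupp,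
    hsupp.trans hsub⟩, hderiv_eq⟩
  exact contDiff_infty_iff_deriv.2
    ⟨fun t ↦ (hderiv t).differentiableAt, hderiv_eq ▸ ψ.contDiff⟩

lemma IsWeakDerivOn.exists_ae_eq_const (hab : a < b) (hf : IntegrableOn f (Icc a b))
    (h : IsWeakDerivOn a b f 0) : ∃ c, ∀ᵐ t ∂volume.restrict (Icc a b), f t = c := by
  obtain ⟨χ, hχ⟩ := exists_testFunction_integral_eq_one hab
  set c := ∫ t, χ t * f t with hc
  have hmul : ∀ η : 𝓓(openInterval a b, ℝ), Integrable fun t ↦ η t * f t := fun η ↦ by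
    refine (integrableOn_iff_integrable_of_support_subset fun t ht ↦ by_contra fun htab ↦ ht ?_).1
      (integrableOn_testFunction_mul hf η)
    rw [testFunction_eq_zero_of_notMem_Ioo η fun h ↦ htab (Ioo_subset_Icc_self h), zero_mul]
  have horth : ∀ η : 𝓓(openInterval a b, ℝ), ∫ t, η t * (f t - c) = 0 := fun η ↦ by
    -- `η - (∫ η) χ` has mean zero, so it is the derivative of a test function.
    have hmean : ∫ t, (η - (∫ s, η s) • χ) t = 0 := by
      simp only [FunLike.coe_sub, FunLike.coe_smul, Pi.sub_apply, Pi.smul_apply, smul_eq_mul]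
      rw [integral_sub (integrable_testFunction η) ((integrable_testFunction χ).const_mul _),
        integral_const_mul, hχ, mul_one, sub_self]
    obtain ⟨θ, hθ⟩ := exists_testFunction_deriv_eq _ hmean
    have hweak := h θ
    rw [hθ, setIntegral_Icc_testFunction_mul] at hweak
    simp only [FunLike.coe_sub, FunLike.coe_smul, Pi.sub_apply, Pi.smul_apply, smul_eq_mul,
      sub_mul, mul_assoc, Pi.zero_apply, mul_zero, integral_zero, neg_eq_zero] at hweak
    rw [integral_sub (hmul η) ((hmul χ).const_mul _), integral_const_mul] at hweak
    simp only [mul_sub]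
    rw [integral_sub (hmul η) ((integrable_testFunction η).mul_const c), integral_mul_const, hc,
      hweak]
  have hzero := isOpen_Ioo.ae_eq_zero_of_integral_contDiff_smul_eq_zero
    ((hf.mono_set Ioo_subset_Icc_self).sub (integrableOn_const (by simp))).locallyIntegrableOn
    fun η hη hηc hηs ↦ horth ⟨η, hη, hηc, hηs⟩
  refine ⟨c, ?_⟩
  rw [← Measure.restrict_congr_set Ioo_ae_eq_Icc, ae_restrict_iff' measurableSet_Ioo]
  filter_upwards [hzero] with t ht htab using sub_eq_zero.1 (ht htab)

lemma IsWeakDerivOn.congr_right (h : IsWeakDerivOn a b f g)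
    (hgg' : ∀ᵐ t ∂volume.restrict (Icc a b), g t = g' t) : IsWeakDerivOn a b f g' := fun η ↦
  (h η).trans <| integral_congr_ae <| hgg'.mono fun t ht ↦ congrArg (η t * ·) ht

lemma IsWeakDerivOn.sub (hf : IsWeakDerivOn a b f g) (hf' : IsWeakDerivOn a b f' g')
    (hfi : IntegrableOn f (Icc a b)) (hgi : IntegrableOn g (Icc a b))
    (hfi' : IntegrableOn f' (Icc a b)) (hgi' : IntegrableOn g' (Icc a b)) :
    IsWeakDerivOn a b (f - f') (g - g') := fun η ↦ by
  simp only [Pi.sub_apply, mul_sub]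
  rw [integral_sub (integrableOn_deriv_testFunction_mul hfi η)
      (integrableOn_deriv_testFunction_mul hfi' η),
    integral_sub (integrableOn_testFunction_mul hgi η) (integrableOn_testFunction_mul hgi' η),
    ← hf η, ← hf' η]
  ring

lemma isWeakDerivOn_intervalIntegral (hab : a ≤ b) (hg : IntervalIntegrable g volume a b) :
    IsWeakDerivOn a b (fun t ↦ ∫ s in a..t, g s) g := fun η ↦ by
  have hηAC : AbsolutelyContinuousOnInterval η a b :=
    (η.contDiff.of_le (by simp)).contDiffOn.absolutelyContinuousOnInterval
  have hparts := hηAC.integral_mul_deriv_eq_deriv_mul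
    (hg.absolutelyContinuousOnInterval_intervalIntegral (c := a) left_mem_uIcc)
  have hderiv : ∫ t in a..b, η t * deriv (fun t ↦ ∫ s in a..t, g s) t = ∫ t in a..b, η t * g t :=
    intervalIntegral.integral_congr_ae <| by
      filter_upwards [hg.ae_hasDerivAt_integral] with t ht htab
      rw [(ht (uIoc_subset_uIcc htab) a left_mem_uIcc).deriv]
  rw [hderiv, testFunction_eq_zero_of_notMem_Ioo η (by simp : a ∉ Ioo a b),
    testFunction_eq_zero_of_notMem_Ioo η (by simp : b ∉ Ioo a b)] at hparts
  simp only [integral_Icc_eq_integral_Ioc, ← intervalIntegral.integral_of_le hab, hparts, zero_mul,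
    sub_zero, zero_sub]

theorem IsWeakDerivOn.exists_ae_eq_const_add_integral (hab : a < b)
    (h : IsWeakDerivOn a b f g) (hf : IntegrableOn f (Icc a b)) (hg : IntegrableOn g (Icc a b)) :
    ∃ c, ∀ᵐ t ∂volume.restrict (Icc a b), f t = c + ∫ s in a..t, g s := by
  have hgI : IntervalIntegrable g volume a b :=
    (intervalIntegrable_iff_integrableOn_Icc_of_le hab.le).2 hg
  have hGi : IntegrableOn (fun t ↦ ∫ s in a..t, g s) (Icc a b) := by
    rw [← uIcc_of_le hab.le] at hg ⊢
    exact (intervalIntegral.continuousOn_primitive_interval hg).integrableOn_compact isCompact_uIcc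
  have hdiff := h.sub (isWeakDerivOn_intervalIntegral hab.le hgI) hf hg hGi hg
  rw [sub_self] at hdiff
  obtain ⟨c, hc⟩ := hdiff.exists_ae_eq_const hab (hf.sub hGi)
  exact ⟨c, hc.mono fun t ht ↦ sub_eq_iff_eq_add.1 ht⟩

end WeakDerivative

section TotalVariation

variable {Y : Type*} [MeasurableSpace Y] {μ ν p q : Measure Y}

lemma tvDist_comm (μ ν : Measure Y) : tvDist μ ν = tvDist ν μ := add_comm _ _

lemma measure_eq_of_add_eq_add_right [IsFiniteMeasure p] (h : μ + p = ν + p) : μ = ν := by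
  rw [← Measure.add_sub_cancel (μ := μ) (ν := p), h, Measure.add_sub_cancel]

lemma measure_le_sub_add_self (μ ν : Measure Y) [IsFiniteMeasure ν] : μ ≤ μ - ν + ν := by
  let m : Measure Y := sInf ((· + ν) '' {d | μ ≤ d + ν})
  have hνm : ν ≤ m := le_sInf <| forall_mem_image.2 fun d _ ↦ Measure.le_add_left le_rfl
  have hμm : μ ≤ m := le_sInf <| forall_mem_image.2 fun d hd ↦ hd
  have hsub : m - ν ≤ μ - ν :=
    le_sInf fun d hd ↦ Measure.sub_le_of_le_add (sInf_le (mem_image_of_mem _ hd))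
  calc μ ≤ m := hμm
    _ = m - ν + ν := (Measure.sub_add_cancel_of_le hνm).symm
    _ ≤ μ - ν + ν := by gcongr

lemma measure_apply_le_add_tvDist (μ ν : Measure Y) [IsFiniteMeasure ν] (A : Set Y) :
    μ A ≤ ν A + tvDist μ ν :=
  calc μ A ≤ (μ - ν) A + ν A := measure_le_sub_add_self μ ν A
    _ ≤ (μ - ν) univ + ν A := by gcongr; exact subset_univ A
    _ ≤ ν A + tvDist μ ν := by rw [add_comm]; gcongr; exact le_self_add

lemma tvDist_le_of_add_eq_add (h : μ + p = ν + q) : tvDist μ ν ≤ q univ + p univ := by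
  have hμν : μ - ν ≤ q := Measure.sub_le_of_le_add <| by
    rw [add_comm q, ← h]; exact Measure.le_add_right le_rfl
  have hνμ : ν - μ ≤ p := Measure.sub_le_of_le_add <| by
    rw [add_comm p, h]; exact Measure.le_add_right le_rfl
  exact add_le_add (hμν univ) (hνμ univ)

lemma eventually_isFiniteMeasure_of_tendsto_tvDist {ι : Type*} {l : Filter ι} {μ : ι → Measure Y}
    [IsFiniteMeasure ν] (h : Tendsto (fun i ↦ tvDist (μ i) ν) l (𝓝 0)) :
    ∀ᶠ i in l, IsFiniteMeasure (μ i) := by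
  filter_upwards [h.eventually_lt_const ENNReal.zero_lt_top] with i hi
  exact ⟨(measure_apply_le_add_tvDist _ ν univ).trans_lt
    (ENNReal.add_lt_top.2 ⟨measure_lt_top ν univ, hi⟩)⟩

lemma isFiniteMeasure_of_tendsto_tvDist {ι : Type*} {l : Filter ι} {μ : ι → Measure Y}
    (h : Tendsto (fun i ↦ tvDist (μ i) ν) l (𝓝 0)) (hfin : ∃ᶠ i in l, IsFiniteMeasure (μ i)) :
    IsFiniteMeasure ν := by
  obtain ⟨i, _, hi⟩ := (hfin.and_eventually (h.eventually_lt_const ENNReal.zero_lt_top)).exists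
  rw [tvDist_comm] at hi
  exact ⟨(measure_apply_le_add_tvDist ν (μ i) univ).trans_lt
    (ENNReal.add_lt_top.2 ⟨measure_lt_top (μ i) univ, hi⟩)⟩

lemma measure_le_of_tendsto_tvDist {ι : Type*} {l : Filter ι} {μ ν : ι → Measure Y}
    {μ₀ ν₀ : Measure Y} [IsFiniteMeasure μ₀] [IsFiniteMeasure ν₀]
    (hμ : Tendsto (fun i ↦ tvDist (μ i) μ₀) l (𝓝 0))
    (hν : Tendsto (fun i ↦ tvDist (ν i) ν₀) l (𝓝 0)) (h : ∃ᶠ i in l, μ i ≤ ν i) : μ₀ ≤ ν₀ := by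
  refine Measure.le_intro fun A _ _ ↦ ?_
  have hlim : Tendsto (fun i ↦ ν₀ A + tvDist (ν i) ν₀ + tvDist (μ i) μ₀) l (𝓝 (ν₀ A)) := by
    simpa using (hν.const_add (ν₀ A)).add hμ
  refine ge_of_tendsto_of_frequently hlim
    ((h.and_eventually (eventually_isFiniteMeasure_of_tendsto_tvDist hμ)).mono ?_)
  rintro i ⟨hi, _⟩
  calc μ₀ A ≤ μ i A + tvDist μ₀ (μ i) := measure_apply_le_add_tvDist _ _ A
    _ ≤ ν i A + tvDist μ₀ (μ i) := by gcongr
    _ ≤ ν₀ A + tvDist (ν i) ν₀ + tvDist (μ i) μ₀ := by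
      rw [tvDist_comm μ₀]; gcongr; exact measure_apply_le_add_tvDist _ _ A

/-- Continuity on `S` of a curve of measures with respect to the total variation distance. -/
def TVContinuousOn {T : Type*} [TopologicalSpace T] (ρ : T → Measure Y) (S : Set T) : Prop :=
  ∀ t₀ ∈ S, Tendsto (fun t ↦ tvDist (ρ t) (ρ t₀)) (𝓝[S] t₀) (𝓝 0)

lemma frequently_nhdsWithin_Icc_of_ae {a b t₀ : ℝ} (hab : a < b) (ht₀ : t₀ ∈ Icc a b)
    {P : ℝ → Prop} (h : ∀ᵐ t ∂volume.restrict (Icc a b), P t) : ∃ᶠ t in 𝓝[Icc a b] t₀, P t := by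
  rw [ae_restrict_iff' measurableSet_Icc] at h
  have hdense := (Measure.dense_of_ae h).open_subset_closure_inter (isOpen_Ioo (a := a) (b := b))
  have hmem : t₀ ∈ closure (Ioo a b ∩ {t | t ∈ Icc a b → P t}) := by
    refine closure_minimal hdense isClosed_closure ?_
    rwa [closure_Ioo hab.ne]
  rw [frequently_nhdsWithin_iff]
  exact (mem_closure_iff_frequently.1 hmem).mono fun t ht ↦
    ⟨ht.2 (Ioo_subset_Icc_self ht.1), Ioo_subset_Icc_self ht.1⟩

lemma TVContinuousOn.le_of_ae_le {a b : ℝ} (hab : a < b) {μ ν : ℝ → Measure Y}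
    (hμ : TVContinuousOn μ (Icc a b)) (hν : TVContinuousOn ν (Icc a b))
    (hμfin : ∀ t ∈ Icc a b, IsFiniteMeasure (μ t)) (hνfin : ∀ t ∈ Icc a b, IsFiniteMeasure (ν t))
    (h : ∀ᵐ t ∂volume.restrict (Icc a b), μ t ≤ ν t) {t : ℝ} (ht : t ∈ Icc a b) : μ t ≤ ν t :=
  have := hμfin t ht
  have := hνfin t ht
  measure_le_of_tendsto_tvDist (hμ t ht) (hν t ht) (frequently_nhdsWithin_Icc_of_ae hab ht h)

lemma TVContinuousOn.eq_of_ae_eq {a b : ℝ} (hab : a < b) {μ ν : ℝ → Measure Y}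
    (hμ : TVContinuousOn μ (Icc a b)) (hν : TVContinuousOn ν (Icc a b))
    (hνfin : ∀ t ∈ Icc a b, IsFiniteMeasure (ν t))
    (h : ∀ᵐ t ∂volume.restrict (Icc a b), μ t = ν t) {t : ℝ} (ht : t ∈ Icc a b) : μ t = ν t := by
  have hμfin : ∀ t ∈ Icc a b, IsFiniteMeasure (μ t) := fun t ht ↦ by
    refine isFiniteMeasure_of_tendsto_tvDist (hμ t ht) (frequently_nhdsWithin_Icc_of_ae hab ht ?_)
    filter_upwards [h, ae_restrict_mem measurableSet_Icc] with s hs hsab using hs ▸ hνfin s hsab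
  exact le_antisymm (hμ.le_of_ae_le hab hν hμfin hνfin (h.mono fun _ ↦ le_of_eq) ht)
    (hν.le_of_ae_le hab hμ hνfin hμfin (h.mono fun _ ↦ ge_of_eq) ht)

end TotalVariation

section Kernel

variable {T V : Type*} [MeasurableSpace T] [MeasurableSpace V] {κ η : Kernel T V} {τ σ : Measure T}

lemma isFiniteMeasure_comp_iff : IsFiniteMeasure (κ ∘ₘ τ) ↔ ∫⁻ t, κ t univ ∂τ < ⊤ := by
  rw [isFiniteMeasure_iff, Measure.bind_apply .univ κ.aemeasurable]

lemma ae_isFiniteMeasure_of_isFiniteMeasure_comp [IsFiniteMeasure (κ ∘ₘ τ)] :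
    ∀ᵐ t ∂τ, IsFiniteMeasure (κ t) :=
  (ae_lt_top (κ.measurable_coe .univ) (isFiniteMeasure_comp_iff.1 ‹_›).ne).mono fun _ ht ↦ ⟨ht⟩

lemma isFiniteMeasure_comp_of_le [IsFiniteMeasure (κ ∘ₘ τ)] (h : σ ≤ τ) :
    IsFiniteMeasure (κ ∘ₘ σ) :=
  isFiniteMeasure_comp_iff.2 <|
    (lintegral_mono' h le_rfl).trans_lt (isFiniteMeasure_comp_iff.1 ‹IsFiniteMeasure (κ ∘ₘ τ)›)

section Integral

variable {E : Type*} [NormedAddCommGroup E] [NormedSpace ℝ E] {f : V → E}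

lemma integrable_integral_of_integrable_comp (hf : Integrable f (κ ∘ₘ τ)) :
    Integrable (fun t ↦ ∫ x, f x ∂κ t) τ := by
  rw [Measure.comp_eq_comp_const_apply] at hf
  exact hf.integral_comp

lemma integral_kernel_comp_measure (hf : Integrable f (κ ∘ₘ τ)) :
    ∫ x, f x ∂(κ ∘ₘ τ) = ∫ t, ∫ x, f x ∂κ t ∂τ := by
  rw [Measure.comp_eq_comp_const_apply] at hf ⊢
  exact Kernel.integral_comp hf

end Integral

lemma ae_eq_of_forall_ae_apply_eq [MeasurableSpace.CountablyGenerated V] {μ ν : T → Measure V}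
    (hfin : ∀ᵐ t ∂τ, IsFiniteMeasure (μ t))
    (h : ∀ A, MeasurableSet A → ∀ᵐ t ∂τ, μ t A = ν t A) : ∀ᵐ t ∂τ, μ t = ν t := by
  let 𝒜 := generateSetAlgebra (MeasurableSpace.countableGeneratingSet V)
  have hgen : ‹MeasurableSpace V› = MeasurableSpace.generateFrom 𝒜 := by
    rw [generateFrom_generateSetAlgebra_eq, MeasurableSpace.generateFrom_countableGeneratingSet]
  have hpi : IsPiSystem 𝒜 := isSetAlgebra_generateSetAlgebra.isSetRing.isSetSemiring.isPiSystem
  have hcount : 𝒜.Countable :=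
    countable_generateSetAlgebra MeasurableSpace.countable_countableGeneratingSet
  have hae : ∀ᵐ t ∂τ, ∀ A ∈ 𝒜, μ t A = ν t A := (ae_ball_iff hcount).2 fun A hA ↦
    h A (hgen ▸ MeasurableSpace.measurableSet_generateFrom hA)
  filter_upwards [hfin, hae, h univ .univ] with t _ ht hu
  exact ext_of_generate_finite 𝒜 hgen hpi ht hu

variable [TopologicalSpace V] [HasOuterApproxClosed V] [BorelSpace V]
  [MeasurableSpace.CountablyGenerated V]

lemma ae_eq_of_forall_boundedContinuous_integral_ae_eq [SigmaFinite τ] [IsFiniteMeasure (κ ∘ₘ τ)]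
    [IsFiniteMeasure (η ∘ₘ τ)]
    (h : ∀ ζ : V →ᵇ ℝ, ∀ᵐ t ∂τ, ∫ x, ζ x ∂κ t = ∫ x, ζ x ∂η t) : ∀ᵐ t ∂τ, κ t = η t := by
  have hcomp (S : Set T) : κ ∘ₘ τ.restrict S = η ∘ₘ τ.restrict S := by
    have hle : τ.restrict S ≤ τ := Measure.restrict_le_self
    have : IsFiniteMeasure (κ ∘ₘ τ.restrict S) := isFiniteMeasure_comp_of_le hle
    have : IsFiniteMeasure (η ∘ₘ τ.restrict S) := isFiniteMeasure_comp_of_le hle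
    refine ext_of_forall_integral_eq_of_IsFiniteMeasure fun ζ ↦ ?_
    rw [integral_kernel_comp_measure (ζ.integrable _),
      integral_kernel_comp_measure (ζ.integrable _)]
    exact integral_congr_ae (ae_restrict_of_ae (h ζ))
  refine ae_eq_of_forall_ae_apply_eq ae_isFiniteMeasure_of_isFiniteMeasure_comp fun A hA ↦ ?_
  refine ae_eq_of_forall_setLIntegral_eq_of_sigmaFinite (κ.measurable_coe hA) (η.measurable_coe hA)
    fun S _ _ ↦ ?_
  rw [← Measure.bind_apply hA κ.aemeasurable, hcomp S, Measure.bind_apply hA η.aemeasurable]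

lemma exists_ae_add_eq_add_of_forall_boundedContinuous [IsFiniteMeasure τ]
    [IsFiniteMeasure (κ ∘ₘ τ)] [IsFiniteMeasure (η ∘ₘ τ)]
    (h : ∀ ζ : V →ᵇ ℝ, ∃ c, ∀ᵐ t ∂τ, ∫ x, ζ x ∂κ t = c + ∫ x, ζ x ∂η t) :
    ∃ m n : Measure V, IsFiniteMeasure m ∧ IsFiniteMeasure n ∧ ∀ᵐ t ∂τ, κ t + n = m + η t := by
  rcases eq_zero_or_neZero τ with rfl | _
  · exact ⟨0, 0, inferInstance, inferInstance, by simp⟩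
  have hτ : (τ univ)⁻¹ ≠ ∞ := ENNReal.inv_ne_top.2 (NeZero.ne _)
  let m : Measure V := (τ univ)⁻¹ • (κ ∘ₘ τ)
  let n : Measure V := (τ univ)⁻¹ • (η ∘ₘ τ)
  have : IsFiniteMeasure m := Measure.smul_finite _ hτ
  have : IsFiniteMeasure n := Measure.smul_finite _ hτ
  have hκfin : IsFiniteMeasure ((κ + Kernel.const T n) ∘ₘ τ) := by
    rw [Measure.add_comp]; infer_instance
  have hηfin : IsFiniteMeasure ((Kernel.const T m + η) ∘ₘ τ) := by
    rw [Measure.add_comp]; infer_instance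
  refine ⟨m, n, inferInstance, inferInstance,
    ae_eq_of_forall_boundedContinuous_integral_ae_eq (κ := κ + Kernel.const T n)
      (η := Kernel.const T m + η) fun ζ ↦ ?_⟩
  obtain ⟨c, hc⟩ := h ζ
  -- Averaging the hypothesis over `τ` identifies the unknown constant `c`.
  have hmean : ∫ x, ζ x ∂m = c + ∫ x, ζ x ∂n := by
    simp only [m, n, integral_smul_measure]
    rw [integral_kernel_comp_measure (ζ.integrable _),
      integral_kernel_comp_measure (ζ.integrable _), integral_congr_ae hc,
      integral_add (integrable_const c) (integrable_integral_of_integrable_comp (ζ.integrable _)),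
      integral_const, smul_add, smul_smul]
    simp [measureReal_def, NeZero.ne (τ univ), ENNReal.toReal_eq_zero_iff]
  filter_upwards [hc, ae_isFiniteMeasure_of_isFiniteMeasure_comp (κ := κ) (τ := τ),
    ae_isFiniteMeasure_of_isFiniteMeasure_comp (κ := η) (τ := τ)] with t ht _ _
  simp only [FunLike.coe_add, Pi.add_apply, Kernel.const_apply]
  rw [integral_add_measure (ζ.integrable _) (ζ.integrable _),
    integral_add_measure (ζ.integrable _) (ζ.integrable _), ht, hmean]
  ring

end Kernel

section TimeIntegral

variable {V : Type*} [MeasurableSpace V] {κ : Kernel ℝ V} {a b r s t t₀ : ℝ}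

/-- The measure-valued primitive `t ↦ ∫_a^t κ_s ds`, zero for `t ≤ a`. It is built on `(a, t]`, so
that consecutive integrals add up exactly. -/
noncomputable def timeIntegral (κ : Kernel ℝ V) (a : ℝ) : Kernel ℝ V where
  toFun t := κ ∘ₘ volume.restrict (Ioc a t)
  measurable' := by
    refine Measure.measurable_of_measurable_coe _ fun A hA ↦ Monotone.measurable fun s t hst ↦ ?_
    rw [Measure.bind_apply hA κ.aemeasurable, Measure.bind_apply hA κ.aemeasurable]
    exact lintegral_mono_set (Ioc_subset_Ioc_right hst)

lemma timeIntegral_apply (κ : Kernel ℝ V) (a t : ℝ) :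
    timeIntegral κ a t = κ ∘ₘ volume.restrict (Ioc a t) := rfl

lemma timeIntegral_apply_apply {A : Set V} (hA : MeasurableSet A) :
    timeIntegral κ a t A = ∫⁻ s in Ioc a t, κ s A :=
  Measure.bind_apply hA κ.aemeasurable

lemma timeIntegral_zero : timeIntegral (0 : Kernel ℝ V) a t = 0 := by
  rw [timeIntegral_apply, FunLike.coe_zero, Measure.bind_zero_right]

lemma timeIntegral_add_timeIntegral (κ : Kernel ℝ V) (hrs : r ≤ s) (hst : s ≤ t) :
    timeIntegral κ r s + timeIntegral κ s t = timeIntegral κ r t := by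
  simp only [timeIntegral_apply]
  rw [← Measure.comp_add, ← Measure.restrict_union (Ioc_disjoint_Ioc_of_le le_rfl)
    measurableSet_Ioc, Ioc_union_Ioc_eq_Ioc hrs hst]

lemma integral_timeIntegral_sub_integral_timeIntegral {κ η : Kernel ℝ V} {f : V → ℝ}
    (hst : s ≤ t) (hκ : Integrable f (timeIntegral κ s t))
    (hη : Integrable f (timeIntegral η s t)) :
    ∫ x, f x ∂timeIntegral κ s t - ∫ x, f x ∂timeIntegral η s t
      = ∫ r in s..t, (∫ x, f x ∂κ r - ∫ x, f x ∂η r) := by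
  rw [intervalIntegral.integral_of_le hst, integral_sub (integrable_integral_of_integrable_comp hκ)
    (integrable_integral_of_integrable_comp hη), ← integral_kernel_comp_measure hκ,
    ← integral_kernel_comp_measure hη, timeIntegral_apply, timeIntegral_apply]

variable [IsFiniteMeasure (κ ∘ₘ volume.restrict (Icc a b))]

lemma isFiniteMeasure_timeIntegral (hs : a ≤ s) (ht : t ≤ b) :
    IsFiniteMeasure (timeIntegral κ s t) :=
  isFiniteMeasure_comp_of_le <| Measure.restrict_mono_set _ <|
    Ioc_subset_Icc_self.trans (Icc_subset_Icc hs ht)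

lemma isFiniteMeasure_timeIntegral_comp :
    IsFiniteMeasure (timeIntegral κ a ∘ₘ volume.restrict (Icc a b)) := by
  refine isFiniteMeasure_comp_iff.2 <| setLIntegral_lt_top_of_le_nnreal (by simp)
    ⟨((κ ∘ₘ volume.restrict (Icc a b)) univ).toNNReal, fun t ht ↦ ?_⟩
  rw [ENNReal.coe_toNNReal (measure_ne_top _ _), timeIntegral_apply_apply .univ,
    Measure.bind_apply .univ κ.aemeasurable]
  exact lintegral_mono_set (Ioc_subset_Icc_self.trans (Icc_subset_Icc_right ht.2))

lemma tendsto_timeIntegral_univ_nhds_zero (ht₀ : t₀ ∈ Icc a b) :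
    Tendsto (fun t ↦ timeIntegral κ (min t₀ t) (max t₀ t) univ) (𝓝[Icc a b] t₀) (𝓝 0) := by
  have hfin : ∫⁻ t in Icc a b, κ t univ ≠ ⊤ := (isFiniteMeasure_comp_iff.1 inferInstance).ne
  have hvol : Tendsto (fun t ↦ volume.restrict (Icc a b) (uIoc t₀ t)) (𝓝[Icc a b] t₀) (𝓝 0) := by
    have hdist : Tendsto (fun t ↦ ENNReal.ofReal |t - t₀|) (𝓝[Icc a b] t₀) (𝓝 0) := by
      have hcont : Continuous fun t : ℝ ↦ ENNReal.ofReal |t - t₀| :=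
        ENNReal.continuous_ofReal.comp (by fun_prop)
      simpa using (hcont.tendsto t₀).mono_left nhdsWithin_le_nhds
    refine tendsto_of_tendsto_of_tendsto_of_le_of_le tendsto_const_nhds hdist (fun _ ↦ zero_le)
      fun t ↦ ?_
    exact (Measure.restrict_apply_le _ _).trans_eq Real.volume_uIoc
  refine (tendsto_setLIntegral_zero hfin hvol).congr' ?_
  filter_upwards [self_mem_nhdsWithin] with t ht
  rw [timeIntegral_apply_apply .univ, Measure.restrict_restrict measurableSet_uIoc,
    inter_eq_left.2 (uIoc_subset_uIcc.trans (uIcc_subset_Icc ht₀ ht)), uIoc]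

end TimeIntegral

section MildSolution

variable {V : Type*} [MeasurableSpace V] {p q : Kernel ℝ V} {a b : ℝ} {μ : ℝ → Measure V}

/-- `μ` solves `∂ₜμ = p - q` on `I` in integrated form, with gain rate `p` and loss rate `q`. Both
rates are nonnegative measures, and the equation is written without subtraction. -/
def IsMildSolutionOn (p q : Kernel ℝ V) (I : Set ℝ) (μ : ℝ → Measure V) : Prop :=
  ∀ t₁ ∈ I, ∀ t₂ ∈ I, t₁ ≤ t₂ → μ t₂ + timeIntegral q t₁ t₂ = μ t₁ + timeIntegral p t₁ t₂

lemma IsMildSolutionOn.tvDist_le {I : Set ℝ} (h : IsMildSolutionOn p q I μ) {t₁ t₂ : ℝ}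
    (ht₁ : t₁ ∈ I) (ht₂ : t₂ ∈ I) (ht : t₁ ≤ t₂) :
    tvDist (μ t₂) (μ t₁) ≤ timeIntegral p t₁ t₂ univ + timeIntegral q t₁ t₂ univ :=
  tvDist_le_of_add_eq_add (h t₁ ht₁ t₂ ht₂ ht)

lemma isMildSolutionOn_add_timeIntegral (p : Kernel ℝ V) (m : Measure V) :
    IsMildSolutionOn p 0 (Icc a b) fun t ↦ m + timeIntegral p a t := fun t₁ ht₁ t₂ _ ht ↦ by
  rw [timeIntegral_zero, add_zero, add_assoc, timeIntegral_add_timeIntegral p ht₁.1 ht]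

variable [IsFiniteMeasure (q ∘ₘ volume.restrict (Icc a b))]

lemma isMildSolutionOn_of_add_eq_add {m n : Measure V} [IsFiniteMeasure n]
    (h : ∀ t ∈ Icc a b, μ t + (n + timeIntegral q a t) = m + timeIntegral p a t) :
    IsMildSolutionOn p q (Icc a b) μ := fun t₁ ht₁ t₂ ht₂ ht ↦ by
  have : IsFiniteMeasure (timeIntegral q a t₁) := isFiniteMeasure_timeIntegral le_rfl ht₁.2
  refine measure_eq_of_add_eq_add_right (p := n + timeIntegral q a t₁) ?_
  calc μ t₂ + timeIntegral q t₁ t₂ + (n + timeIntegral q a t₁)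
      = μ t₂ + (n + (timeIntegral q a t₁ + timeIntegral q t₁ t₂)) := by abel
    _ = m + timeIntegral p a t₂ := by
      rw [timeIntegral_add_timeIntegral q ht₁.1 ht, h t₂ ht₂]
    _ = μ t₁ + (n + timeIntegral q a t₁) + timeIntegral p t₁ t₂ := by
      rw [← timeIntegral_add_timeIntegral p ht₁.1 ht, h t₁ ht₁, add_assoc]
    _ = μ t₁ + timeIntegral p t₁ t₂ + (n + timeIntegral q a t₁) := by abel

variable [IsFiniteMeasure (p ∘ₘ volume.restrict (Icc a b))]

lemma IsMildSolutionOn.tvContinuousOn (h : IsMildSolutionOn p q (Icc a b) μ) :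
    TVContinuousOn μ (Icc a b) := fun t₀ ht₀ ↦ by
  have hlim := (tendsto_timeIntegral_univ_nhds_zero (κ := p) ht₀).add
    (tendsto_timeIntegral_univ_nhds_zero (κ := q) ht₀)
  rw [add_zero] at hlim
  refine tendsto_of_tendsto_of_tendsto_of_le_of_le' tendsto_const_nhds hlim
    (Eventually.of_forall fun _ ↦ zero_le) ?_
  filter_upwards [self_mem_nhdsWithin] with t ht
  rcases le_total t₀ t with hle | hle
  · rw [min_eq_left hle, max_eq_right hle]
    exact h.tvDist_le ht₀ ht hle
  · rw [min_eq_right hle, max_eq_left hle, tvDist_comm]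
    exact h.tvDist_le ht ht₀ hle

lemma IsMildSolutionOn.integral_sub_integral (h : IsMildSolutionOn p q (Icc a b) μ)
    (hfin : ∀ t ∈ Icc a b, IsFiniteMeasure (μ t)) {φ : V → ℝ} (hφ : Measurable φ)
    (hbdd : ∃ C, ∀ x, |φ x| ≤ C) {t₁ t₂ : ℝ} (ht₁ : t₁ ∈ Icc a b) (ht₂ : t₂ ∈ Icc a b)
    (ht : t₁ ≤ t₂) :
    ∫ x, φ x ∂μ t₂ - ∫ x, φ x ∂μ t₁ = ∫ t in t₁..t₂, (∫ x, φ x ∂p t - ∫ x, φ x ∂q t) := by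
  obtain ⟨C, hC⟩ := hbdd
  have hint (m : Measure V) [IsFiniteMeasure m] : Integrable φ m :=
    .of_bound hφ.aestronglyMeasurable C (.of_forall hC)
  have := hfin t₁ ht₁
  have := hfin t₂ ht₂
  have : IsFiniteMeasure (timeIntegral p t₁ t₂) := isFiniteMeasure_timeIntegral ht₁.1 ht₂.2
  have : IsFiniteMeasure (timeIntegral q t₁ t₂) := isFiniteMeasure_timeIntegral ht₁.1 ht₂.2
  have heq := congrArg (fun m : Measure V ↦ ∫ x, φ x ∂m) (h t₁ ht₁ t₂ ht₂ ht)
  simp only [integral_add_measure (hint _) (hint _)] at heq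
  rw [← integral_timeIntegral_sub_integral_timeIntegral ht (hint _) (hint _)]
  linarith

variable [TopologicalSpace V] [HasOuterApproxClosed V] [BorelSpace V]
  [MeasurableSpace.CountablyGenerated V] {ρ : Kernel ℝ V}
  [IsFiniteMeasure (ρ ∘ₘ volume.restrict (Icc a b))]

lemma exists_ae_add_timeIntegral_eq_of_isWeakDerivOn (hab : a < b)
    (hweak : ∀ ζ : V →ᵇ ℝ, IsWeakDerivOn a b (fun t ↦ ∫ x, ζ x ∂ρ t)
      fun t ↦ ∫ x, ζ x ∂p t - ∫ x, ζ x ∂q t) :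
    ∃ m n : Measure V, IsFiniteMeasure m ∧ IsFiniteMeasure n ∧
      ∀ᵐ t ∂volume.restrict (Icc a b),
        ρ t + (n + timeIntegral q a t) = m + timeIntegral p a t := by
  have hp : IsFiniteMeasure (timeIntegral p a ∘ₘ volume.restrict (Icc a b)) :=
    isFiniteMeasure_timeIntegral_comp
  have hρq : IsFiniteMeasure ((ρ + timeIntegral q a) ∘ₘ volume.restrict (Icc a b)) := by
    have := isFiniteMeasure_timeIntegral_comp (κ := q) (a := a) (b := b)
    rw [Measure.add_comp]
    infer_instance
  have hint (ζ : V →ᵇ ℝ) (κ : Kernel ℝ V) [IsFiniteMeasure (κ ∘ₘ volume.restrict (Icc a b))] :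
      IntegrableOn (fun t ↦ ∫ x, ζ x ∂κ t) (Icc a b) :=
    integrable_integral_of_integrable_comp (ζ.integrable _)
  suffices ∀ ζ : V →ᵇ ℝ, ∃ c, ∀ᵐ t ∂volume.restrict (Icc a b),
      ∫ x, ζ x ∂(ρ + timeIntegral q a) t = c + ∫ x, ζ x ∂timeIntegral p a t by
    obtain ⟨m, n, hm, hn, hmn⟩ := exists_ae_add_eq_add_of_forall_boundedContinuous this
    refine ⟨m, n, hm, hn, hmn.mono fun t ht ↦ ?_⟩
    rw [← ht, FunLike.coe_add, Pi.add_apply, add_comm n, add_assoc]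
  intro ζ
  obtain ⟨c, hc⟩ := (hweak ζ).exists_ae_eq_const_add_integral hab (hint ζ ρ)
    ((hint ζ p).sub (hint ζ q))
  refine ⟨c, ?_⟩
  filter_upwards [hc, ae_restrict_mem measurableSet_Icc,
    ae_isFiniteMeasure_of_isFiniteMeasure_comp (κ := ρ) (τ := volume.restrict (Icc a b))]
    with t hρt ht _
  have : IsFiniteMeasure (timeIntegral p a t) := isFiniteMeasure_timeIntegral le_rfl ht.2
  have : IsFiniteMeasure (timeIntegral q a t) := isFiniteMeasure_timeIntegral le_rfl ht.2
  rw [FunLike.coe_add, Pi.add_apply, integral_add_measure (ζ.integrable _) (ζ.integrable _), hρt,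
    ← integral_timeIntegral_sub_integral_timeIntegral ht.1 (ζ.integrable _) (ζ.integrable _)]
  ring

theorem exists_isMildSolutionOn_of_isWeakDerivOn (hab : a < b)
    (hweak : ∀ ζ : V →ᵇ ℝ, IsWeakDerivOn a b (fun t ↦ ∫ x, ζ x ∂ρ t)
      fun t ↦ ∫ x, ζ x ∂p t - ∫ x, ζ x ∂q t) :
    ∃ μ : ℝ → Measure V, (∀ t ∈ Icc a b, IsFiniteMeasure (μ t)) ∧
      (∀ᵐ t ∂volume.restrict (Icc a b), μ t = ρ t) ∧ IsMildSolutionOn p q (Icc a b) μ := by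
  obtain ⟨m, n, _, _, hρ⟩ := exists_ae_add_timeIntegral_eq_of_isWeakDerivOn hab hweak
  have hp : ∀ t ∈ Icc a b, IsFiniteMeasure (m + timeIntegral p a t) := fun t ht ↦
    have : IsFiniteMeasure (timeIntegral p a t) := isFiniteMeasure_timeIntegral le_rfl ht.2
    inferInstance
  have hq : ∀ t ∈ Icc a b, IsFiniteMeasure (n + timeIntegral q a t) := fun t ht ↦
    have : IsFiniteMeasure (timeIntegral q a t) := isFiniteMeasure_timeIntegral le_rfl ht.2
    inferInstance
  -- The inequality holds a.e. because `ρ t ≥ 0`, hence everywhere by continuity of both sides.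
  have hle : ∀ t ∈ Icc a b, n + timeIntegral q a t ≤ m + timeIntegral p a t := fun t ht ↦ by
    refine (isMildSolutionOn_add_timeIntegral q n).tvContinuousOn.le_of_ae_le hab
      (isMildSolutionOn_add_timeIntegral p m).tvContinuousOn hq hp (hρ.mono fun s hs ↦ ?_) ht
    rw [← hs]
    exact Measure.le_add_left le_rfl
  have hμ : ∀ t ∈ Icc a b, m + timeIntegral p a t - (n + timeIntegral q a t)
      + (n + timeIntegral q a t) = m + timeIntegral p a t := fun t ht ↦ by
    have := hq t ht
    exact Measure.sub_add_cancel_of_le (hle t ht)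
  refine ⟨fun t ↦ m + timeIntegral p a t - (n + timeIntegral q a t), fun t ht ↦ ?_, ?_,
    isMildSolutionOn_of_add_eq_add hμ⟩
  · have := hp t ht
    exact isFiniteMeasure_of_le _ Measure.sub_le
  · filter_upwards [hρ, ae_restrict_mem measurableSet_Icc] with t hρt ht
    have := hq t ht
    refine measure_eq_of_add_eq_add_right (p := n + timeIntegral q a t) ?_
    rw [hμ t ht, hρt]

end MildSolution

section Flux

variable {V : Type*} [MeasurableSpace V] {j : Kernel ℝ (V × V)} {τ : Measure ℝ}

instance isFiniteMeasure_fst_comp [IsFiniteMeasure (j ∘ₘ τ)] : IsFiniteMeasure (j.fst ∘ₘ τ) := by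
  rw [Kernel.fst_eq, ← Measure.map_comp _ _ measurable_fst]
  infer_instance

instance isFiniteMeasure_snd_comp [IsFiniteMeasure (j ∘ₘ τ)] : IsFiniteMeasure (j.snd ∘ₘ τ) := by
  rw [Kernel.snd_eq, ← Measure.map_comp _ _ measurable_snd]
  infer_instance

lemma timeIntegral_fst_univ (j : Kernel ℝ (V × V)) (t₁ t₂ : ℝ) :
    timeIntegral j.fst t₁ t₂ univ = ∫⁻ t in Icc t₁ t₂, j t univ := by
  simp only [timeIntegral_apply_apply .univ, Measure.restrict_congr_set Ioc_ae_eq_Icc,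
    Kernel.fst_apply, Measure.map_apply measurable_fst .univ, preimage_univ]

lemma timeIntegral_snd_univ (j : Kernel ℝ (V × V)) (t₁ t₂ : ℝ) :
    timeIntegral j.snd t₁ t₂ univ = ∫⁻ t in Icc t₁ t₂, j t univ := by
  simp only [timeIntegral_apply_apply .univ, Measure.restrict_congr_set Ioc_ae_eq_Icc,
    Kernel.snd_apply, Measure.map_apply measurable_snd .univ, preimage_univ]

lemma ae_integral_snd_sub_integral_fst [IsFiniteMeasure (j ∘ₘ τ)] {φ : V → ℝ} (hφ : Measurable φ)
    (hbdd : ∃ C, ∀ x, |φ x| ≤ C) :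
    ∀ᵐ t ∂τ, ∫ x, φ x ∂j.snd t - ∫ x, φ x ∂j.fst t = ∫ z, (φ z.2 - φ z.1) ∂j t := by
  obtain ⟨C, hC⟩ := hbdd
  filter_upwards [ae_isFiniteMeasure_of_isFiniteMeasure_comp (κ := j) (τ := τ)] with t _
  have hint (f : V × V → V) (hf : Measurable f) : Integrable (fun z ↦ φ (f z)) (j t) :=
    .of_bound (hφ.comp hf).aestronglyMeasurable C (.of_forall fun z ↦ hC (f z))
  rw [integral_sub (hint _ measurable_snd) (hint _ measurable_fst), Kernel.snd_apply,
    Kernel.fst_apply, integral_map measurable_snd.aemeasurable hφ.aestronglyMeasurable,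
    integral_map measurable_fst.aemeasurable hφ.aestronglyMeasurable]

end Flux

theorem continuity_equation_continuous_representative_general
    {V : Type*} [TopologicalSpace V] [HasOuterApproxClosed V] [MeasurableSpace V] [BorelSpace V]
    [MeasurableSpace.CountablyGenerated V] (a b : ℝ) (hab : a < b)
    (ρ : Kernel ℝ V) (j : Kernel ℝ (V × V))
    (hρint : ∫⁻ t in Icc a b, ρ t univ < ⊤) (hjint : ∫⁻ t in Icc a b, j t univ < ⊤)
    (hweak : ∀ ζ : V →ᵇ ℝ, IsWeakDerivOn a b (fun t ↦ ∫ x, ζ x ∂ρ t)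
      fun t ↦ ∫ z, (ζ z.2 - ζ z.1) ∂j t) :
    ∃ ρ' : ℝ → Measure V,
      (∀ t ∈ Icc a b, ρ' t univ < ⊤) ∧
      (∀ᵐ t ∂volume.restrict (Icc a b), ρ' t = ρ t) ∧
      (∀ t₁ ∈ Icc a b, ∀ t₂ ∈ Icc a b, t₁ ≤ t₂ →
        tvDist (ρ' t₂) (ρ' t₁) ≤ 2 * ∫⁻ t in Icc t₁ t₂, j t univ) ∧
      TVContinuousOn ρ' (Icc a b) ∧
      (∀ φ : V → ℝ, Measurable φ → (∃ C : ℝ, ∀ x, |φ x| ≤ C) →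
        ∀ t₁ ∈ Icc a b, ∀ t₂ ∈ Icc a b, t₁ ≤ t₂ →
          ∫ x, φ x ∂ρ' t₂ - ∫ x, φ x ∂ρ' t₁ = ∫ t in Icc t₁ t₂, ∫ z, (φ z.2 - φ z.1) ∂j t) ∧
      (∀ σ : ℝ → Measure V, (∀ᵐ t ∂volume.restrict (Icc a b), σ t = ρ t) →
        TVContinuousOn σ (Icc a b) → ∀ t ∈ Icc a b, σ t = ρ' t) := by
  have : IsFiniteMeasure (ρ ∘ₘ volume.restrict (Icc a b)) := isFiniteMeasure_comp_iff.2 hρint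
  have : IsFiniteMeasure (j ∘ₘ volume.restrict (Icc a b)) := isFiniteMeasure_comp_iff.2 hjint
  obtain ⟨ρ', hfin, hae, hmild⟩ := exists_isMildSolutionOn_of_isWeakDerivOn
    (p := j.snd) (q := j.fst) hab fun ζ ↦ (hweak ζ).congr_right <|
      (ae_integral_snd_sub_integral_fst ζ.continuous.measurable ⟨‖ζ‖, ζ.norm_coe_le_norm⟩).mono
        fun _ ↦ Eq.symm
  refine ⟨ρ', fun t ht ↦ (hfin t ht).measure_univ_lt_top, hae, fun t₁ ht₁ t₂ ht₂ ht ↦ ?_,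
    hmild.tvContinuousOn, fun φ hφ hbdd t₁ ht₁ t₂ ht₂ ht ↦ ?_, fun σ hσ hσcont t ↦ ?_⟩
  · refine (hmild.tvDist_le ht₁ ht₂ ht).trans_eq ?_
    rw [timeIntegral_fst_univ, timeIntegral_snd_univ, two_mul]
  · rw [hmild.integral_sub_integral hfin hφ hbdd ht₁ ht₂ ht, intervalIntegral.integral_of_le ht,
      ← integral_Icc_eq_integral_Ioc]
    exact integral_congr_ae <| ae_restrict_of_ae_restrict_of_subset (Icc_subset_Icc ht₁.1 ht₂.2) <|
      ae_integral_snd_sub_integral_fst hφ hbdd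
  · exact hσcont.eq_of_ae_eq hab hmild.tvContinuousOn hfin <| by
      filter_upwards [hσ, hae] with s hσs hs using hσs.trans hs.symm

/-- Continuous representative for the continuity equation: a measurable family
`(ρ_t, j_t)` satisfying the continuity equation in the weak (distributional) sense
admits a unique representative `ρ'` that is continuous in the total variation norm,
satisfies the TV estimate `‖ρ'_{t₂} − ρ'_{t₁}‖_TV ≤ 2∫_{t₁}^{t₂} j_t(V×V) dt`, and
the integrated equation against every bounded Borel function. -/
theorem continuity_equation_continuous_representative
    {V : Type*} [TopologicalSpace V] [TopologicalSpace.MetrizableSpace V]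
    [TopologicalSpace.SeparableSpace V] [MeasurableSpace V] [BorelSpace V]
    (a b : ℝ) (hab : a < b)
    (ρ : ℝ → Measure V) (j : ℝ → Measure (V × V))
    (hρfin : ∀ t ∈ Icc a b, ρ t Set.univ < ⊤)
    (hjfin : ∀ t ∈ Icc a b, j t Set.univ < ⊤)
    (hρmeas : ∀ B : Set V, MeasurableSet B → Measurable fun t => ρ t B)
    (hjmeas : ∀ C : Set (V × V), MeasurableSet C → Measurable fun t => j t C)
    (hρint : ∫⁻ t in Icc a b, ρ t Set.univ < ⊤)
    (hjint : ∫⁻ t in Icc a b, j t Set.univ < ⊤)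
    (hweak : ∀ η : ℝ → ℝ, ContDiff ℝ (⊤ : ℕ∞) η → HasCompactSupport η →
      tsupport η ⊆ Ioo a b →
      ∀ ζ : BoundedContinuousFunction V ℝ,
        -∫ t in Icc a b, deriv η t * ∫ x, ζ x ∂(ρ t)
          = ∫ t in Icc a b, η t * ∫ p : V × V, (ζ p.2 - ζ p.1) ∂(j t)) :
    ∃ ρ' : ℝ → Measure V,
      (∀ t ∈ Icc a b, ρ' t Set.univ < ⊤) ∧
      (∀ᵐ t ∂(volume.restrict (Icc a b)), ρ' t = ρ t) ∧
      (∀ t₁ ∈ Icc a b, ∀ t₂ ∈ Icc a b, t₁ ≤ t₂ →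
        tvDist (ρ' t₂) (ρ' t₁) ≤ 2 * ∫⁻ t in Icc t₁ t₂, j t Set.univ) ∧
      (∀ t₀ ∈ Icc a b,
        Tendsto (fun t => tvDist (ρ' t) (ρ' t₀)) (nhdsWithin t₀ (Icc a b))
          (nhds 0)) ∧
      (∀ φ : V → ℝ, Measurable φ → (∃ C : ℝ, ∀ x, |φ x| ≤ C) →
        ∀ t₁ ∈ Icc a b, ∀ t₂ ∈ Icc a b, t₁ ≤ t₂ →
          (∫ x, φ x ∂(ρ' t₂)) - (∫ x, φ x ∂(ρ' t₁))
            = ∫ t in Icc t₁ t₂, ∫ p : V × V, (φ p.2 - φ p.1) ∂(j t)) ∧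
      (∀ σ : ℝ → Measure V,
        (∀ᵐ t ∂(volume.restrict (Icc a b)), σ t = ρ t) →
        (∀ t₀ ∈ Icc a b,
          Tendsto (fun t => tvDist (σ t) (σ t₀)) (nhdsWithin t₀ (Icc a b))
            (nhds 0)) →
        ∀ t ∈ Icc a b, σ t = ρ' t) := by
  have : SecondCountableTopology V :=
    let _ := metrizableSpaceMetric V
    UniformSpace.secondCountable_of_separable V
  exact continuity_equation_continuous_representative_general a b hab
    ⟨ρ, Measure.measurable_of_measurable_coe ρ hρmeas⟩
    ⟨j, Measure.measurable_of_measurable_coe j hjmeas⟩ hρint hjint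
    fun ζ η ↦ hweak η η.contDiff η.hasCompactSupport η.tsupport_subset ζ
end
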